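/- Let Q be a computable real number with Q > 0, and let T ∈ (0,1). If W(Q,T) = ∑_{p ∈ dom U} |p|^Q · 2^{−|p|/T} is a computable real number, then: (i) T is right-computable but not left-computable; (ii) T is Chaitin T-random and T-compressible. -/

import Mathlib

open Filter

/-- A set of finite binary strings is prefix-free if no element of it is a
prefix of another (distinct) element of it. -/
def PrefixFree (S : Set (List Bool)) : Prop :=
  ∀ p ∈ S, ∀ q ∈ S, p <+: q → p = q

/-- A computer: a partial recursive function from finite binary strings to
finite binary strings whose domain is a prefix-free set. -/
structure Computer where
  f : List Bool →. List Bool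
  partrec : Partrec f
  prefixFree : PrefixFree {p | (f p).Dom}

/-- The domain of a computer. -/
def Computer.domain (C : Computer) : Set (List Bool) := {p | (C.f p).Dom}

/-- A computer `U` is optimal if every computer can be simulated on `U` with
only a constant increase in program length. -/
def IsOptimal (U : Computer) : Prop :=
  ∀ C : Computer, ∃ d : ℕ, ∀ p : List Bool, (C.f p).Dom →
    ∃ p' : List Bool, p'.length ≤ p.length + d ∧ ∀ s, s ∈ C.f p → s ∈ U.f p'

/-- Program-size complexity `H(s)`: the minimal length of a program `p`
with `U(p) = s`. -/
noncomputable def H (U : Computer) (s : List Bool) : ℕ :=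
  sInf {n | ∃ p : List Bool, p.length = n ∧ s ∈ U.f p}

/-- The `n`-th bit (`n ≥ 1`) of the base-two expansion of `x mod 1`
(the expansion chosen with infinitely many zeros). -/
noncomputable def binDigit (x : ℝ) (n : ℕ) : Bool :=
  decide (⌊Int.fract x * 2 ^ n⌋ % 2 = 1)

/-- The first `n` bits of the base-two expansion of `x mod 1` (with
infinitely many zeros). -/
noncomputable def bits (x : ℝ) (n : ℕ) : List Bool :=
  (List.range n).map fun i => binDigit x (i + 1)

/-- A real `x` is weakly Chaitin `D`-random (w.r.t. the computer `U`). -/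
def WeaklyChaitinRandom (U : Computer) (D x : ℝ) : Prop :=
  ∃ c : ℝ, ∀ n : ℕ, 1 ≤ n → D * n - c ≤ (H U (bits x n) : ℝ)

/-- A real `x` is Chaitin `D`-random (w.r.t. the computer `U`). -/
def ChaitinRandom (U : Computer) (D x : ℝ) : Prop :=
  Tendsto (fun n : ℕ => (H U (bits x n) : ℝ) - D * n) atTop atTop

/-- A real `x` is `D`-compressible (w.r.t. the computer `U`). -/
def DCompressible (U : Computer) (D x : ℝ) : Prop :=
  Filter.limsup (fun n : ℕ => (H U (bits x n) : ℝ) / n) atTop ≤ D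

/-- A computable real number. -/
def ComputableReal (T : ℝ) : Prop :=
  ∃ f : ℕ → ℚ, Computable f ∧ ∀ n : ℕ, 1 ≤ n → |T - (f n : ℝ)| < 1 / n

/-- A right-computable real number. -/
def RightComputable (T : ℝ) : Prop :=
  ∃ g : ℕ → ℚ, Computable g ∧ (∀ n, T ≤ (g n : ℝ)) ∧
    Tendsto (fun n => ((g n : ℚ) : ℝ)) atTop (nhds T)

/-- A left-computable real number. -/
def LeftComputable (T : ℝ) : Prop := RightComputable (-T)

/-- The term `2 ^ (-|p| / T)` of the partition function `Z(T)`. -/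
noncomputable def zterm (U : Computer) (T : ℝ) (p : U.domain) : ℝ :=
  (2 : ℝ) ^ (-((p : List Bool).length : ℝ) / T)

/-- The term `|p| ^ Q * 2 ^ (-|p| / T)` of `W(Q,T)`. -/
noncomputable def wterm (U : Computer) (Q T : ℝ) (p : U.domain) : ℝ :=
  ((p : List Bool).length : ℝ) ^ Q * (2 : ℝ) ^ (-((p : List Bool).length : ℝ) / T)

/-- The term `|p| * 2 ^ (-|p| / T)` of `W(1,T)`. -/
noncomputable def wlterm (U : Computer) (T : ℝ) (p : U.domain) : ℝ :=
  ((p : List Bool).length : ℝ) * (2 : ℝ) ^ (-((p : List Bool).length : ℝ) / T)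

/-- The term `|p| ^ 2 * 2 ^ (-|p| / T)` of `W(2,T)`. -/
noncomputable def wsqterm (U : Computer) (T : ℝ) (p : U.domain) : ℝ :=
  ((p : List Bool).length : ℝ) ^ 2 * (2 : ℝ) ^ (-((p : List Bool).length : ℝ) / T)

/-- A lower-computable function `f : ℕ⁺ → [0,∞)` (represented on `ℕ`,
with all conditions imposed on positive arguments). -/
def LowerComputableFun (f : ℕ → ℝ) : Prop :=
  ∃ a : ℕ → ℕ → ℚ, Computable₂ a ∧
    (∀ k n : ℕ, 1 ≤ k → 1 ≤ n → (a k n : ℝ) ≤ f n) ∧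
    (∀ n : ℕ, 1 ≤ n → Tendsto (fun k => ((a k n : ℚ) : ℝ)) atTop (nhds (f n)))

/-- A lower-computable semi-measure on finite binary strings. -/
def LowerComputableSemiMeasure (r : List Bool → ℝ) : Prop :=
  (∀ s, 0 ≤ r s) ∧ (∀ s, r s ≤ 1) ∧ Summable r ∧ (∑' s, r s) ≤ 1 ∧
    ∃ f : ℕ → List Bool → ℚ, Computable₂ f ∧
      (∀ n s, ((f n s : ℚ) : ℝ) ≤ r s) ∧
      (∀ s, Tendsto (fun n => ((f n s : ℚ) : ℝ)) atTop (nhds (r s)))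

/-- A universal probability. -/
def UniversalProbability (m : List Bool → ℝ) : Prop :=
  LowerComputableSemiMeasure m ∧
    ∀ r : List Bool → ℝ, LowerComputableSemiMeasure r →
      ∃ c : ℝ, 0 < c ∧ ∀ s, c * r s ≤ m s


section Part1
section PR
variable {α β γ σ : Type} [Primcodable α] [Primcodable β] [Primcodable γ] [Primcodable σ]

theorem pr_id : Primrec fun x : α => x := Primrec.id
theorem pr_const (c : β) : Primrec fun _ : α => c := Primrec.const c
theorem pr_comp {f : β → γ} {g : α → β} (hf : Primrec f) (hg : Primrec g) :
  Primrec fun x => f (g x) := hf.comp hg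
theorem pr_pair {f : α → β} {g : α → γ} (hf : Primrec f) (hg : Primrec g) :
  Primrec fun x => (f x, g x) := hf.pair hg
theorem pr_fst {f : α → β × γ} (hf : Primrec f) : Primrec fun x => (f x).1 := Primrec.fst.comp hf
theorem pr_snd {f : α → β × γ} (hf : Primrec f) : Primrec fun x => (f x).2 := Primrec.snd.comp hf
theorem pr_add {f g : α → ℕ} (hf : Primrec f) (hg : Primrec g) : Primrec fun x => f x + g x :=
  Primrec.nat_add.comp hf hg
theorem pr_mul {f g : α → ℕ} (hf : Primrec f) (hg : Primrec g) : Primrec fun x => f x * g x :=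
  Primrec.nat_mul.comp hf hg
theorem pr_sub {f g : α → ℕ} (hf : Primrec f) (hg : Primrec g) : Primrec fun x => f x - g x :=
  Primrec.nat_sub.comp hf hg
theorem pr_div {f g : α → ℕ} (hf : Primrec f) (hg : Primrec g) : Primrec fun x => f x / g x :=
  Primrec.nat_div.comp hf hg
theorem pr_mod {f g : α → ℕ} (hf : Primrec f) (hg : Primrec g) : Primrec fun x => f x % g x :=
  Primrec.nat_mod.comp hf hg
theorem pr_npow : Primrec₂ ((· ^ ·) : ℕ → ℕ → ℕ) := by
  have : Primrec₂ fun (a n : ℕ) => Nat.rec (motive := fun _ => ℕ) 1 (fun _ r => r * a) n := by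
    refine Primrec.nat_rec (f := fun _ : ℕ => 1) (g := fun a p => p.2 * a) (Primrec.const 1) ?_
    exact pr_mul (pr_snd (pr_snd pr_id)) (pr_fst pr_id)
  refine this.of_eq fun a n => ?_
  induction n with
  | zero => simp
  | succ n ih => simp [pow_succ, ih]
theorem pr_pow {f g : α → ℕ} (hf : Primrec f) (hg : Primrec g) : Primrec fun x => f x ^ g x :=
  pr_npow.comp hf hg
theorem pr_npair {f g : α → ℕ} (hf : Primrec f) (hg : Primrec g) :
    Primrec fun x => Nat.pair (f x) (g x) := Primrec₂.natPair.comp hf hg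
theorem pr_unpair {f : α → ℕ} (hf : Primrec f) :
    Primrec fun x => Nat.unpair (f x) := Primrec.unpair.comp hf
theorem pr_le {f g : α → ℕ} (hf : Primrec f) (hg : Primrec g) : Primrec fun x => decide (f x ≤ g x) :=
  (Primrec.nat_le.comp hf hg).decide
theorem pr_lt {f g : α → ℕ} (hf : Primrec f) (hg : Primrec g) : Primrec fun x => decide (f x < g x) :=
  (Primrec.nat_lt.comp hf hg).decide
theorem pr_eq [DecidableEq β] {f g : α → β} (hf : Primrec f) (hg : Primrec g) :
    Primrec fun x => decide (f x = g x) :=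
  (Primrec.eq.comp hf hg).decide
theorem pr_and {f g : α → Bool} (hf : Primrec f) (hg : Primrec g) : Primrec fun x => (f x && g x) :=
  Primrec.and.comp hf hg
theorem pr_or {f g : α → Bool} (hf : Primrec f) (hg : Primrec g) : Primrec fun x => (f x || g x) :=
  Primrec.or.comp hf hg
theorem pr_not {f : α → Bool} (hf : Primrec f) : Primrec fun x => (! f x) :=
  Primrec.not.comp hf
theorem pr_dand {P Q : α → Prop} [DecidablePred P] [DecidablePred Q]
    (hf : Primrec fun x => decide (P x)) (hg : Primrec fun x => decide (Q x)) :
    Primrec fun x => decide (P x ∧ Q x) :=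
  (pr_and hf hg).of_eq fun x => by simp
theorem pr_append {f g : α → List β} (hf : Primrec f) (hg : Primrec g) : Primrec fun x => f x ++ g x :=
  Primrec.list_append.comp hf hg
theorem pr_cons {f : α → β} {g : α → List β} (hf : Primrec f) (hg : Primrec g) :
    Primrec fun x => f x :: g x := Primrec.list_cons.comp hf hg
theorem pr_length {f : α → List β} (hf : Primrec f) : Primrec fun x => (f x).length :=
  Primrec.list_length.comp hf
theorem pr_range {f : α → ℕ} (hf : Primrec f) : Primrec fun x => List.range (f x) :=
  Primrec.list_range.comp hf
theorem pr_map {f : α → List β} {g : α → β → γ} (hf : Primrec f) (hg : Primrec fun p : α × β => g p.1 p.2) :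
    Primrec fun x => (f x).map (g x) := Primrec.list_map hf hg
theorem pr_sum {f : α → List ℕ} (hf : Primrec f) : Primrec fun x => (f x).sum := by
  have : Primrec fun x => (f x).foldl (fun s b => s + b) 0 :=
    Primrec.list_foldl (h := fun _ p => p.1 + p.2) hf (Primrec.const 0)
      (pr_add (pr_fst (pr_snd pr_id)) (pr_snd (pr_snd pr_id)))
  refine this.of_eq fun x => ?_
  rw [List.sum_eq_foldl]
theorem pr_all {f : α → List β} {g : α → β → Bool} (hf : Primrec f)
    (hg : Primrec fun p : α × β => g p.1 p.2) : Primrec fun x => (f x).all (g x) := by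
  have : Primrec fun x => (f x).foldl (fun s b => s && g x b) true :=
    Primrec.list_foldl (h := fun x p => p.1 && g x p.2) hf (Primrec.const true)
      (pr_and (pr_fst (pr_snd pr_id)) (pr_comp hg (pr_pair (pr_fst pr_id) (pr_snd (pr_snd pr_id)))))
  refine this.of_eq fun x => ?_
  have key : ∀ (l : List β) (b : Bool), l.foldl (fun s b => s && g x b) b = (b && l.all (g x)) := by
    intro l
    induction l with
    | nil => simp
    | cons a l ih => intro b; simp [ih, Bool.and_assoc]
  rw [key]; simp
theorem pr_replicate {f : α → ℕ} (b : β) (hf : Primrec f) : Primrec fun x => List.replicate (f x) b := by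
  refine (pr_map (g := fun _ _ => b) (pr_range hf) (pr_const b)).of_eq fun x => ?_
  simp
theorem pr_ite {c : α → Prop} [DecidablePred c] {f g : α → β} (hc : Primrec fun x => decide (c x))
    (hf : Primrec f) (hg : Primrec g) : Primrec fun x => if c x then f x else g x :=
  Primrec.ite hc.primrecPred hf hg
end PR

attribute [fun_prop] Primrec pr_id pr_const pr_comp pr_pair pr_fst pr_snd pr_add pr_mul pr_sub pr_div pr_mod pr_pow
 pr_npair pr_unpair pr_le pr_lt pr_eq pr_and pr_or pr_not pr_append pr_cons pr_length pr_range pr_map pr_sum pr_all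
 pr_replicate pr_ite pr_dand


theorem cp_pair {α β γ : Type} [Primcodable α] [Primcodable β] [Primcodable γ]
    {f : α → β} {g : α → γ} (hf : Computable f) (hg : Computable g) :
  Computable fun x => (f x, g x) := hf.pair hg

/-- Recursively enumerable predicates, in a convenient form. -/
def RE {α : Type} [Primcodable α] (P : α → Prop) : Prop :=
  ∃ R : α → ℕ → Bool, Computable (fun p : α × ℕ => R p.1 p.2) ∧ ∀ x, P x ↔ ∃ n, R x n = true

section RES
variable {α β γ σ : Type} [Primcodable α] [Primcodable β] [Primcodable γ] [Primcodable σ]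

theorem RE.of_comp {P : α → Prop} [DecidablePred P] (h : Computable fun x => decide (P x)) : RE P :=
  ⟨fun x _ => decide (P x), h.comp Computable.fst, fun x => by simp⟩

theorem RE.of_prim {P : α → Prop} [DecidablePred P] (h : Primrec fun x => decide (P x)) : RE P :=
  RE.of_comp h.to_comp

theorem RE.comp {P : α → Prop} (h : RE P) {f : β → α} (hf : Computable f) : RE fun x => P (f x) := by
  obtain ⟨R, hR, h⟩ := h
  exact ⟨fun x n => R (f x) n, hR.comp (cp_pair (hf.comp Computable.fst) Computable.snd), fun x => h _⟩

theorem RE.compp {P : α → Prop} (h : RE P) {f : β → α} (hf : Primrec f) : RE fun x => P (f x) :=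
  h.comp hf.to_comp

theorem RE.of_iff {P Q : α → Prop} (h : RE P) (hi : ∀ x, Q x ↔ P x) : RE Q := by
  obtain ⟨R, hR, h⟩ := h
  exact ⟨R, hR, fun x => (hi x).trans (h x)⟩

theorem RE.and {P Q : α → Prop} (h : RE P) (h' : RE Q) : RE fun x => P x ∧ Q x := by
  obtain ⟨R, hR, h⟩ := h
  obtain ⟨R', hR', h'⟩ := h'
  refine ⟨fun x n => R x n.unpair.1 && R' x n.unpair.2, ?_, fun x => ?_⟩
  · have a1 : Primrec fun p : α × ℕ => (p.1, p.2.unpair.1) := by fun_prop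
    have a2 : Primrec fun p : α × ℕ => (p.1, p.2.unpair.2) := by fun_prop
    exact Primrec.and.to_comp.comp (hR.comp a1.to_comp) (hR'.comp a2.to_comp)
  · show P x ∧ Q x ↔ _
    rw [h, h']
    constructor
    · rintro ⟨⟨a, ha⟩, b, hb⟩
      exact ⟨Nat.pair a b, by simp [ha, hb]⟩
    · rintro ⟨n, hn⟩
      simp only [Bool.and_eq_true] at hn
      exact ⟨⟨_, hn.1⟩, _, hn.2⟩

theorem RE.search_aux {P : α × β → Prop} (h : RE P) :
    ∃ F : α → ℕ → Option β, Computable₂ F ∧ (∀ a n b, b ∈ F a n → P (a, b)) ∧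
      ∀ a b, P (a, b) → ∃ n, b ∈ F a n := by
  obtain ⟨R, hR, h⟩ := h
  refine ⟨fun a n => (Encodable.decode (α := β) n.unpair.1).bind
    fun b => bif R (a, b) n.unpair.2 then some b else none, ?_, ?_, ?_⟩
  · have a1 : Primrec fun p : α × ℕ => p.2.unpair.1 := by fun_prop
    have a2 : Primrec fun p : (α × ℕ) × β => ((p.1.1, p.2), p.1.2.unpair.2) := by fun_prop
    have a3 : Computable fun p : (α × ℕ) × β => R (p.1.1, p.2) p.1.2.unpair.2 :=
      hR.comp (g := fun p : (α × ℕ) × β => ((p.1.1, p.2), p.1.2.unpair.2)) a2.to_comp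
    have a4 : Computable fun p : α × ℕ => Encodable.decode (α := β) p.2.unpair.1 :=
      Computable.decode.comp a1.to_comp
    have a5 : Computable fun p : (α × ℕ) × β => bif R (p.1.1, p.2) p.1.2.unpair.2 then some p.2 else none :=
      Computable.cond a3 (Computable.option_some.comp Computable.snd) (Computable.const none)
    exact Computable.option_bind (f := fun p : α × ℕ => Encodable.decode (α := β) p.2.unpair.1)
      (g := fun p b => bif R (p.1, b) p.2.unpair.2 then some b else none) a4 a5
  · intro a n b hb
    simp only [Option.mem_def, Option.bind_eq_some_iff] at hb
    obtain ⟨b', h1, h2⟩ := hb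
    rw [h]
    cases hh : R (a, b') n.unpair.2
    · simp [hh] at h2
    · simp [hh] at h2
      subst h2
      exact ⟨_, hh⟩
  · intro a b hab
    rw [h] at hab
    obtain ⟨n, hn⟩ := hab
    exact ⟨Nat.pair (Encodable.encode b) n, by simp [hn]⟩

theorem RE.ex {P : α × β → Prop} (h : RE P) : RE fun a => ∃ b, P (a, b) := by
  obtain ⟨F, hF, h1, h2⟩ := h.search_aux
  refine ⟨fun a n => (F a n).isSome, Primrec.option_isSome.to_comp.comp hF, fun x => ?_⟩
  constructor
  · rintro ⟨b, hb⟩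
    obtain ⟨n, hn⟩ := h2 _ _ hb
    exact ⟨n, Option.isSome_iff_exists.2 ⟨b, hn⟩⟩
  · rintro ⟨n, hn⟩
    obtain ⟨b, hb⟩ := Option.isSome_iff_exists.1 hn
    exact ⟨b, h1 _ _ _ hb⟩

theorem RE.choose {P : α × β → Prop} (h : RE P) :
    ∃ ψ : α →. β, Partrec ψ ∧ (∀ a b, b ∈ ψ a → P (a, b)) ∧ ∀ a, (∃ b, P (a, b)) → (ψ a).Dom := by
  obtain ⟨F, hF, h1, h2⟩ := h.search_aux
  refine ⟨fun a => Nat.rfindOpt (F a), Partrec.rfindOpt hF, ?_, ?_⟩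
  · intro a b hb
    obtain ⟨n, hn⟩ := Nat.rfindOpt_spec hb
    exact h1 _ _ _ hn
  · rintro a ⟨b, hb⟩
    rw [Nat.rfindOpt_dom]
    obtain ⟨n, hn⟩ := h2 _ _ hb
    exact ⟨n, b, hn⟩

theorem RE.choose_total {P : α × β → Prop} (h : RE P) (ht : ∀ a, ∃ b, P (a, b)) :
    ∃ f : α → β, Computable f ∧ ∀ a, P (a, f a) := by
  obtain ⟨ψ, hψ, h1, h2⟩ := h.choose
  refine ⟨fun a => (ψ a).get (h2 a (ht a)), ?_, fun a => h1 _ _ (Part.get_mem _)⟩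
  exact hψ.of_eq_tot fun a => Part.get_mem _

end RES
end Part1

section Part2
section RatEnc
open Encodable

theorem enc_rat (q : ℚ) : @encode ℚ Denumerable.toEncodable q = (List.range (@encode ℚ Rat.instEncodable q)).countP (fun y => @decide (y ∈ Set.range (@encode ℚ Rat.instEncodable)) (Classical.dec _)) := by
  have : @encode ℚ Denumerable.toEncodable q = (List.range (@encode ℚ Rat.instEncodable q)).countP (fun y => @decide (y ∈ Set.range (@encode ℚ Rat.instEncodable)) (decidableRangeEncode _ _)) := rfl
  rw [this]
  congr!
theorem enc_rat' (q : ℚ) : @encode ℚ Rat.instEncodable q = Nat.pair (encode q.num) q.den := rfl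
theorem enc_int (q : ℤ) : encode q = if 0 ≤ q then 2 * q.toNat else 2 * (-q-1).toNat+1 := by
  rcases q with q|q
  · show 2 * q = _
    simp
  · show 2 * q+1= _
    have : ¬ (0 ≤ Int.negSucc q) := by omega
    rw [if_neg this]; congr 2; omega

def zpos (z : ℕ) : ℕ := if z % 2 = 0 then z / 2 else 0
def zneg (z : ℕ) : ℕ := if z % 2 = 0 then 0 else z / 2 + 1

theorem zpos_pr : Primrec zpos := by unfold zpos; fun_prop
theorem zneg_pr : Primrec zneg := by unfold zneg; fun_prop

theorem enc_zpos (q : ℤ) : (q : ℤ) = zpos (encode q) - zneg (encode q) := by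
  rw [enc_int, zpos, zneg]
  split_ifs <;> omega

theorem enc_zabs (q : ℤ) : q.natAbs = zpos (encode q) + zneg (encode q) := by
  rw [enc_int, zpos, zneg]
  split_ifs <;> omega

theorem enc_z (z : ℕ) : encode ((zpos z : ℤ) - zneg z) = z := by
  rw [enc_int, zpos, zneg]
  split_ifs <;> omega

theorem pr_gcd : Primrec fun p : ℕ × ℕ => Nat.gcd p.1 p.2 := by
  have : Primrec fun p : ℕ × ℕ => Nat.findGreatest (fun d => p.1 % d = 0 ∧ p.2 % d = 0) (p.1 + p.2) := by
    refine Primrec.nat_findGreatest (by fun_prop) ?_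
    refine Primrec.primrecPred (p := fun x : (ℕ × ℕ) × ℕ => x.1.1 % x.2 = 0 ∧ x.1.2 % x.2 = 0) ?_
    fun_prop
  refine this.of_eq fun p => ?_
  obtain ⟨a, b⟩ := p
  simp only
  rw [Nat.findGreatest_eq_iff]
  refine ⟨?_, ?_, ?_⟩
  · rcases Nat.eq_zero_or_pos a with h | h
    · subst h; simp
    · exact (Nat.gcd_le_left b h).trans (by omega)
  · intro _
    exact ⟨Nat.mod_eq_zero_of_dvd (Nat.gcd_dvd_left _ _), Nat.mod_eq_zero_of_dvd (Nat.gcd_dvd_right _ _)⟩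
  · rintro n hn hn' ⟨h1, h2⟩
    have := Nat.dvd_gcd (Nat.dvd_of_mod_eq_zero h1) (Nat.dvd_of_mod_eq_zero h2)
    rcases Nat.eq_zero_or_pos (Nat.gcd a b) with h | h
    · have := Nat.gcd_eq_zero_iff.1 h
      omega
    · have := Nat.le_of_dvd h this
      omega

def inS (y : ℕ) : Bool := decide (0 < y.unpair.2) &&
  decide (Nat.gcd (zpos y.unpair.1 + zneg y.unpair.1) y.unpair.2 = 1)

theorem inS_pr : Primrec inS := by
  have h1 := zpos_pr
  have h2 := zneg_pr
  have h3 : Primrec fun y : ℕ => Nat.gcd (zpos y.unpair.1 + zneg y.unpair.1) y.unpair.2 :=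
    pr_gcd.comp (g := fun y : ℕ => (zpos y.unpair.1 + zneg y.unpair.1, y.unpair.2)) (by fun_prop)
  exact pr_and (by fun_prop) (pr_eq h3 (pr_const 1))

theorem inS_iff (y : ℕ) : y ∈ Set.range (@encode ℚ Rat.instEncodable) ↔ inS y = true := by
  rw [inS, Bool.and_eq_true, decide_eq_true_eq, decide_eq_true_eq]
  constructor
  · rintro ⟨q, rfl⟩
    rw [enc_rat']
    refine ⟨by simpa using q.pos, ?_⟩
    simp only [Nat.unpair_pair, ← enc_zabs]
    exact q.reduced
  · rintro ⟨h1, h2⟩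
    refine ⟨⟨(zpos y.unpair.1 : ℤ) - zneg y.unpair.1, y.unpair.2, h1.ne', ?_⟩, ?_⟩
    · rw [enc_zabs, enc_z]; exact h2
    · rw [enc_rat']
      simp only [enc_z, Nat.pair_unpair]

def cntS (y : ℕ) : ℕ := ((List.range y).map fun i => if inS i then 1 else 0).sum

theorem cntS_pr : Primrec cntS := by
  unfold cntS
  have := inS_pr
  fun_prop

def encQ (q : ℚ) : ℕ := @encode ℚ Primcodable.toEncodable q

theorem cntS_eq (q : ℚ) : encQ q = cntS (Nat.pair (encode q.num) q.den) := by
  rw [← enc_rat', encQ, cntS]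
  refine (enc_rat q).trans ?_
  generalize List.range _ = l
  induction l with
  | nil => rfl
  | cons a l ih =>
    rw [List.countP_cons, ih]
    rw [List.map_cons, List.sum_cons, add_comm]
    congr 1
    by_cases h : inS a = true
    · rw [if_pos h, if_pos]
      exact @decide_eq_true _ (Classical.dec _) ((inS_iff a).2 h)
    · rw [if_neg h, if_neg]
      intro h'
      exact h ((inS_iff a).1 (@of_decide_eq_true _ (Classical.dec _) h'))

theorem cntS_succ (y : ℕ) : cntS (y+1) = cntS y + if inS y then 1 else 0 := by
  simp [cntS, List.range_succ]

theorem cntS_mono : Monotone cntS := monotone_nat_of_le_succ fun n => by rw [cntS_succ]; omega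

theorem cntS_inj {y y' : ℕ} (h : inS y) (h' : inS y') (he : cntS y = cntS y') : y = y' := by
  by_contra hne
  rcases lt_or_gt_of_ne hne with hl | hl
  · have := cntS_mono (show y + 1 ≤ y' from hl)
    rw [cntS_succ, if_pos h] at this; omega
  · have := cntS_mono (show y' + 1 ≤ y from hl)
    rw [cntS_succ, if_pos h'] at this; omega

theorem rat_pmd : ∃ P M D : ℚ → ℕ, Computable P ∧ Computable M ∧ Computable D ∧
    ∀ q : ℚ, 0 < D q ∧ q = ((P q : ℚ) - M q) / D q := by
  have hR : RE fun p : ℚ × ℕ => inS p.2 ∧ cntS p.2 = encQ p.1 := by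
    refine RE.of_prim ?_
    have h1 := inS_pr
    have h2 := cntS_pr
    have h3 : Primrec encQ := Primrec.encode
    fun_prop
  obtain ⟨f, hf, hP⟩ := hR.choose_total (fun q => ⟨Nat.pair (encode q.num) q.den,
    (inS_iff _).1 ⟨q, enc_rat' q⟩, (cntS_eq q).symm⟩)
  have hf' : ∀ q : ℚ, f q = Nat.pair (encode q.num) q.den := fun q =>
    cntS_inj (hP q).1 ((inS_iff _).1 ⟨q, enc_rat' q⟩) ((hP q).2.trans (cntS_eq q))
  have h1 := zpos_pr
  have h2 := zneg_pr
  have k1 : Primrec fun y : ℕ => zpos y.unpair.1 := by fun_prop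
  have k2 : Primrec fun y : ℕ => zneg y.unpair.1 := by fun_prop
  have k3 : Primrec fun y : ℕ => y.unpair.2 := by fun_prop
  refine ⟨fun q => zpos (f q).unpair.1, fun q => zneg (f q).unpair.1, fun q => (f q).unpair.2,
    k1.to_comp.comp hf, k2.to_comp.comp hf, k3.to_comp.comp hf, fun q => ?_⟩
  simp only [hf', Nat.unpair_pair]
  refine ⟨q.pos, ?_⟩
  conv_lhs => rw [← Rat.num_div_den q]
  congr 1
  exact_mod_cast enc_zpos q.num

theorem dyadic_comp : Computable fun x : ℕ × ℕ => (x.1 : ℚ) / 2 ^ x.2 := by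
  have hR : RE fun p : (ℕ × ℕ) × ℕ => inS p.2 ∧ zneg p.2.unpair.1 = 0 ∧
      zpos p.2.unpair.1 * 2 ^ p.1.2 = p.1.1 * p.2.unpair.2 := by
    refine RE.of_prim ?_
    have h1 := inS_pr
    have h2 := zpos_pr
    have h3 := zneg_pr
    fun_prop
  have key : ∀ x : ℕ × ℕ, ∀ q : ℚ, (zneg (encode q.num) = 0 ∧
      zpos (encode q.num) * 2 ^ x.2 = x.1 * q.den) ↔ q = (x.1 : ℚ) / 2 ^ x.2 := by
    intro x q
    have e1 := enc_zpos q.num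
    have e2 := enc_zabs q.num
    have hd : (q.den : ℚ) ≠ 0 := by exact_mod_cast q.den_nz
    constructor
    · rintro ⟨h1, h2⟩
      rw [h1] at e1
      rw [← Rat.num_div_den q, e1, div_eq_div_iff hd (by positivity)]
      push_cast
      rw [sub_zero]
      exact_mod_cast h2
    · intro h
      have h0 : 0 ≤ q := by rw [h]; positivity
      have h0' := Rat.num_nonneg.2 h0
      have hz : zneg (encode q.num) = 0 := by omega
      refine ⟨hz, ?_⟩
      rw [hz] at e1
      rw [← Rat.num_div_den q, e1, div_eq_div_iff hd (by positivity)] at h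
      push_cast at h
      rw [sub_zero] at h
      exact_mod_cast h
  obtain ⟨f, hf, hP⟩ := hR.choose_total (fun x => by
    set q : ℚ := (x.1 : ℚ) / 2 ^ x.2 with hq
    refine ⟨Nat.pair (encode q.num) q.den, (inS_iff _).1 ⟨q, enc_rat' q⟩, ?_⟩
    simp only [Nat.unpair_pair]
    exact (key x q).2 hq)
  rw [← Computable.encode_iff]
  refine (cntS_pr.to_comp.comp hf).of_eq fun x => ?_
  obtain ⟨h1, h2⟩ := hP x
  obtain ⟨q, hq⟩ := (inS_iff _).2 h1
  rw [enc_rat'] at hq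
  simp only at hq h2
  rw [← hq] at h2
  simp only [Nat.unpair_pair] at h2
  rw [← (key x q).1 h2, ← hq]
  exact (cntS_eq q).symm

end RatEnc

/-- strict lower cut and strict upper cut are r.e. -/
theorem ComputableReal.cuts {x : ℝ} (h : ComputableReal x) :
    (RE fun p : ℕ × ℕ => (p.1 : ℝ) < p.2 * x) ∧ (RE fun p : ℕ × ℕ => (p.2 : ℝ) * x < p.1) := by
  obtain ⟨f, hf, hx⟩ := h
  obtain ⟨P, M, D, hP, hM, hD, hq⟩ := rat_pmd
  have hpmd : Computable fun p : (ℕ × ℕ) × ℕ => (p, P (f p.2), M (f p.2), D (f p.2)) :=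
    cp_pair Computable.id (cp_pair ((hP.comp hf).comp Computable.snd)
      (cp_pair ((hM.comp hf).comp Computable.snd) ((hD.comp hf).comp Computable.snd)))
  have hfe : ∀ n, 0 < (D (f n) : ℝ) ∧ (f n : ℝ) = ((P (f n) : ℝ) - M (f n)) / D (f n) := by
    intro n
    obtain ⟨h1, h2⟩ := hq (f n)
    refine ⟨by exact_mod_cast h1, ?_⟩
    have h3 := congrArg (fun q : ℚ => (q : ℝ)) h2
    simpa using h3
  constructor
  · have h1 : RE fun y : ((ℕ × ℕ) × ℕ) × ℕ × ℕ × ℕ => 1 ≤ y.1.2 ∧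
        y.1.1.1 * y.2.2.2 * y.1.2 + y.1.1.2 * y.2.2.2 + y.1.1.2 * y.2.2.1 * y.1.2 < y.1.1.2 * y.2.1 * y.1.2 :=
      RE.of_prim (by fun_prop)
    refine (h1.comp hpmd).ex.of_iff ?_
    rintro ⟨a, b⟩
    have key : ∀ n : ℕ, 1 ≤ n → (a * D (f n) * n + b * D (f n) + b * M (f n) * n < b * P (f n) * n ↔
        (a : ℝ) < b * (f n - 1 / n)) := by
      intro n hn
      obtain ⟨hd, he⟩ := hfe n
      have hn' : (0:ℝ) < n := by exact_mod_cast hn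
      rw [he, ← Nat.cast_lt (α := ℝ)]
      have : (b : ℝ) * (((P (f n) : ℝ) - M (f n)) / D (f n) - 1 / n) =
        (b * P (f n) * n - b * M (f n) * n - b * D (f n)) / (D (f n) * n) := by field_simp
      rw [this, lt_div_iff₀ (by positivity)]
      push_cast
      constructor <;> intro h <;> linarith
    simp only
    constructor
    · intro h
      have hb : (0:ℝ) < b := by
        rcases Nat.eq_zero_or_pos b with rfl | hb
        · have : (0:ℝ) ≤ a := by positivity
          simp at h; linarith
        · exact_mod_cast hb
      obtain ⟨n, hn⟩ := exists_nat_gt (2 * b / (b * x - a))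
      have hpos : 0 < b * x - a := by linarith
      have hn0 : (0:ℝ) < n := lt_of_le_of_lt (by positivity) hn
      have hn1 : 1 ≤ n := by exact_mod_cast hn0
      refine ⟨n, hn1, (key n hn1).2 ?_⟩
      have h3 := (abs_lt.1 (hx n hn1)).2
      rw [div_lt_iff₀ hpos] at hn
      have : x - 2 / n < f n - 1 / n := by
        have : (2:ℝ) / n = 1 / n + 1 / n := by ring
        linarith
      calc (a:ℝ) < b * (x - 2 / n) := by
            have : (b:ℝ) * (x - 2 / n) = b * x - 2 * b / n := by ring
            rw [this]
            have : 2 * (b:ℝ) / n < b * x - a := by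
              rw [div_lt_iff₀ hn0]; linarith
            linarith
        _ ≤ _ := by gcongr
    · rintro ⟨n, hn, h⟩
      have h1 := (key n hn).1 h
      have h3 := (abs_lt.1 (hx n hn)).1
      refine h1.trans_le ?_
      gcongr
      linarith
  · have h1 : RE fun y : ((ℕ × ℕ) × ℕ) × ℕ × ℕ × ℕ => 1 ≤ y.1.2 ∧
        y.1.1.2 * y.2.1 * y.1.2 + y.1.1.2 * y.2.2.2 < y.1.1.1 * y.2.2.2 * y.1.2 + y.1.1.2 * y.2.2.1 * y.1.2 :=
      RE.of_prim (by fun_prop)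
    refine (h1.comp hpmd).ex.of_iff ?_
    rintro ⟨a, b⟩
    have key : ∀ n : ℕ, 1 ≤ n → (b * P (f n) * n + b * D (f n) < a * D (f n) * n + b * M (f n) * n ↔
        b * (f n + 1 / n) < (a : ℝ)) := by
      intro n hn
      obtain ⟨hd, he⟩ := hfe n
      have hn' : (0:ℝ) < n := by exact_mod_cast hn
      rw [he, ← Nat.cast_lt (α := ℝ)]
      have : (b : ℝ) * (((P (f n) : ℝ) - M (f n)) / D (f n) + 1 / n) =
        (b * P (f n) * n - b * M (f n) * n + b * D (f n)) / (D (f n) * n) := by field_simp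
      rw [this, div_lt_iff₀ (by positivity)]
      push_cast
      constructor <;> intro h <;> linarith
    simp only
    constructor
    · intro h
      obtain ⟨n, hn⟩ := exists_nat_gt (max 1 (2 * b / (a - b * x)))
      have hpos : 0 < a - b * x := by linarith
      have hn0 : (0:ℝ) < n := lt_of_le_of_lt (by positivity) hn
      have hn1 : 1 ≤ n := by exact_mod_cast hn0
      replace hn := (le_max_right _ _).trans_lt hn
      refine ⟨n, hn1, (key n hn1).2 ?_⟩
      have h3 := (abs_lt.1 (hx n hn1)).1
      rw [div_lt_iff₀ hpos] at hn
      have : f n + 1 / n ≤ x + 2 / n := by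
        have : (2:ℝ) / n = 1 / n + 1 / n := by ring
        linarith
      calc b * (f n + 1 / n) ≤ b * (x + 2 / n) := by gcongr
        _ < (a:ℝ) := by
            have : (b:ℝ) * (x + 2 / n) = b * x + 2 * b / n := by ring
            rw [this]
            have : 2 * (b:ℝ) / n < a - b * x := by
              rw [div_lt_iff₀ hn0]; linarith
            linarith
    · rintro ⟨n, hn, h⟩
      have h1 := (key n hn).1 h
      have h3 := (abs_lt.1 (hx n hn)).2
      refine lt_of_le_of_lt ?_ h1
      gcongr
      linarith
end Part2

section Part3
noncomputable def wt (Q t : ℝ) (l : ℕ) : ℝ := (l : ℝ) ^ Q * (2 : ℝ) ^ (-(l : ℝ) / t)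

theorem wt_nonneg (Q t : ℝ) (l : ℕ) : 0 ≤ wt Q t l := by unfold wt; positivity

theorem wt_key (N l a b u n : ℕ) (hb : 1 ≤ b) (hu : 1 ≤ u) :
    ((N : ℝ) * wt ((a : ℝ) / b) ((u : ℝ) / 2 ^ n) l) ^ (b * u) * 2 ^ (l * 2 ^ n * b) =
      (l : ℝ) ^ (a * u) * (N : ℝ) ^ (b * u) := by
  have hb' : (b : ℝ) ≠ 0 := by positivity
  have hu' : (u : ℝ) ≠ 0 := by positivity
  unfold wt
  rw [mul_pow, mul_pow, ← Real.rpow_natCast ((l:ℝ) ^ ((a:ℝ)/b)), ← Real.rpow_mul (by positivity),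
    ← Real.rpow_natCast ((2:ℝ) ^ (_:ℝ)), ← Real.rpow_mul (by positivity)]
  have e1 : (a : ℝ) / b * ((b * u : ℕ) : ℝ) = ((a * u : ℕ) : ℝ) := by push_cast; field_simp
  have e2 : -(l : ℝ) / ((u : ℝ) / 2 ^ n) * ((b * u : ℕ) : ℝ) = -((l * 2 ^ n * b : ℕ) : ℝ) := by
    push_cast; field_simp
  rw [e1, e2, Real.rpow_natCast, Real.rpow_neg (by positivity), Real.rpow_natCast]
  have : (2:ℝ) ^ (l * 2 ^ n * b) ≠ 0 := by positivity
  field_simp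

theorem wt_le_iff (Y N l a b u n : ℕ) (hb : 1 ≤ b) (hu : 1 ≤ u) :
    Y ^ (b * u) * 2 ^ (l * 2 ^ n * b) ≤ l ^ (a * u) * N ^ (b * u) ↔
      (Y : ℝ) ≤ N * wt ((a : ℝ) / b) ((u : ℝ) / 2 ^ n) l := by
  rw [← Nat.cast_le (α := ℝ)]
  push_cast
  rw [← wt_key N l a b u n hb hu, mul_le_mul_iff_left₀ (by positivity),
    pow_le_pow_iff_left₀ (by positivity) (mul_nonneg (by positivity) (wt_nonneg _ _ _)) (by positivity)]

theorem le_wt_iff (Y N l a b u n : ℕ) (hb : 1 ≤ b) (hu : 1 ≤ u) :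
    l ^ (a * u) * N ^ (b * u) ≤ Y ^ (b * u) * 2 ^ (l * 2 ^ n * b) ↔
      N * wt ((a : ℝ) / b) ((u : ℝ) / 2 ^ n) l ≤ (Y : ℝ) := by
  rw [← Nat.cast_le (α := ℝ)]
  push_cast
  rw [← wt_key N l a b u n hb hu, mul_le_mul_iff_left₀ (by positivity),
    pow_le_pow_iff_left₀ (mul_nonneg (by positivity) (wt_nonneg _ _ _)) (by positivity) (by positivity)]

theorem wt_mono_Q {q Q : ℝ} (hq : 0 < q) (h : q ≤ Q) (t : ℝ) (l : ℕ) : wt q t l ≤ wt Q t l := by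
  unfold wt
  rcases Nat.eq_zero_or_pos l with rfl | hl
  · simp [Real.zero_rpow hq.ne', Real.zero_rpow (hq.trans_le h).ne']
  · gcongr
    exact_mod_cast hl

noncomputable def wsum (Q t : ℝ) (L : List ℕ) : ℝ := (L.map (wt Q t)).sum

theorem wsum_cont {Q : ℝ} (hQ : 0 < Q) (t : ℝ) (L : List ℕ) : ContinuousAt (fun q => wsum q t L) Q := by
  induction L with
  | nil => simpa [wsum] using continuousAt_const
  | cons a L ih =>
    have : (fun q => wsum q t (a :: L)) = fun q => wt q t a + wsum q t L := by
      funext q; simp [wsum]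
    rw [this]
    refine ContinuousAt.add ?_ ih
    unfold wt
    exact (Real.continuousAt_const_rpow' hQ.ne').mul continuousAt_const

theorem list_sum_le_map {α : Type} (Z : List α) (f g : α → ℝ) (h : ∀ z ∈ Z, f z ≤ g z) :
    (Z.map f).sum ≤ (Z.map g).sum := List.sum_le_sum h

theorem RE_gt {Q w : ℝ} (hQ : 0 < Q) (hQc : ComputableReal Q) (hw : ComputableReal w) :
    RE fun x : List ℕ × ℕ × ℕ => 1 ≤ x.2.1 ∧ w < wsum Q ((x.2.1 : ℝ) / 2 ^ x.2.2) x.1 := by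
  have h1 : RE fun y : (List ℕ × ℕ × ℕ) × (List (ℕ × ℕ) × ℕ × ℕ × ℕ) =>
      (1 ≤ y.1.2.1 ∧ y.2.1.map (fun z => z.1) = y.1.1 ∧ 1 ≤ y.2.2.1 ∧ 1 ≤ y.2.2.2.1 ∧ 1 ≤ y.2.2.2.2 ∧
        y.2.1.all (fun z => decide (z.2 ^ (y.2.2.2.2 * y.1.2.1) * 2 ^ (z.1 * 2 ^ y.1.2.2 * y.2.2.2.2)
          ≤ z.1 ^ (y.2.2.2.1 * y.1.2.1) * y.2.2.1 ^ (y.2.2.2.2 * y.1.2.1))) = true) :=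
    RE.of_prim (by fun_prop)
  have h2 : RE fun y : (List ℕ × ℕ × ℕ) × (List (ℕ × ℕ) × ℕ × ℕ × ℕ) =>
      ((y.2.2.2.1 : ℕ) : ℝ) < (y.2.2.2.2 : ℕ) * Q :=
    hQc.cuts.1.compp (f := fun y : (List ℕ × ℕ × ℕ) × (List (ℕ × ℕ) × ℕ × ℕ × ℕ) =>
      (y.2.2.2.1, y.2.2.2.2)) (by fun_prop)
  have h3 : RE fun y : (List ℕ × ℕ × ℕ) × (List (ℕ × ℕ) × ℕ × ℕ × ℕ) =>
      (y.2.2.1 : ℝ) * w < ((y.2.1.map (fun z => z.2)).sum : ℕ) :=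
    hw.cuts.2.compp (f := fun y : (List ℕ × ℕ × ℕ) × (List (ℕ × ℕ) × ℕ × ℕ × ℕ) =>
      ((y.2.1.map (fun z => z.2)).sum, y.2.2.1)) (by fun_prop)
  refine (h1.and (h2.and h3)).ex.of_iff ?_
  rintro ⟨L, u, n⟩
  simp only [Prod.exists]
  constructor
  · rintro ⟨hu, h⟩
    refine ?_
    set t : ℝ := (u : ℝ) / 2 ^ n with ht
    have hc := (wsum_cont hQ t L).eventually (lt_mem_nhds h)
    obtain ⟨δ, hδ, hδ'⟩ := Metric.eventually_nhds_iff.1 hc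
    obtain ⟨q, hq1, hq2⟩ := exists_rat_btwn (show max 0 (Q - δ) < Q from max_lt hQ (by linarith))
    have hq0 : (0:ℝ) < q := (le_max_left _ _).trans_lt hq1
    have hq3 : Q - δ < q := (le_max_right _ _).trans_lt hq1
    have hq0' : 0 < q := by exact_mod_cast hq0
    set a := q.num.toNat with ha
    have hnum : 0 < q.num := Rat.num_pos.2 hq0'
    have ha0 : ((a:ℤ)) = q.num := by omega
    have hqe : (q : ℝ) = (a : ℝ) / q.den := by
      conv_lhs => rw [← Rat.num_div_den q, ← ha0]
      simp
    have hlt := hδ' (y := q) (by rw [Real.dist_eq, abs_lt]; constructor <;> linarith)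
    obtain ⟨N, hN⟩ := exists_nat_gt (max 1 (L.length / (wsum q t L - w)))
    have hN1 : (1:ℝ) < N := (le_max_left _ _).trans_lt hN
    have hN2 := (le_max_right _ _).trans_lt hN
    rw [div_lt_iff₀ (by linarith)] at hN2
    refine ⟨L.map fun l => (l, ⌊(N : ℝ) * wt q t l⌋₊), N, a, q.den, ⟨hu, ?_, ?_, by omega, q.pos, ?_⟩, ?_, ?_⟩
    · simp [Function.comp_def]
    · exact_mod_cast hN1.le
    · simp only [List.all_map, List.all_eq_true, Function.comp_apply, decide_eq_true_eq]
      intro l _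
      rw [wt_le_iff _ _ _ _ _ _ _ q.pos hu, ← hqe]
      exact Nat.floor_le (mul_nonneg (by positivity) (wt_nonneg _ _ _))
    · rw [hqe, div_lt_iff₀ (by exact_mod_cast q.pos)] at hq2
      linarith
    · have : ∀ L : List ℕ, (N : ℝ) * wsum q t L - L.length ≤
          (((L.map fun l => (l, ⌊(N : ℝ) * wt q t l⌋₊)).map fun z => z.2).sum : ℕ) := by
        intro L
        induction L with
        | nil => simp [wsum]
        | cons l L ih =>
          have h5 := (Nat.lt_floor_add_one ((N : ℝ) * wt q t l)).le
          simp only [wsum, List.map_cons, List.sum_cons, List.length_cons] at ih ⊢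
          push_cast at ih ⊢
          linarith
      refine lt_of_lt_of_le ?_ (this L)
      linarith
  · rintro ⟨Z, N, a, b, ⟨hu, hZ, hN, ha, hb, hall⟩, hab, hw'⟩
    refine ⟨hu, ?_⟩
    subst hZ
    simp only [List.all_eq_true, decide_eq_true_eq] at hall
    have hN' : (0:ℝ) < N := by exact_mod_cast hN
    have hb' : (0:ℝ) < b := by exact_mod_cast hb
    have ha' : (0:ℝ) < a := by exact_mod_cast ha
    have hq : (a:ℝ) / b ≤ Q := by rw [div_le_iff₀ hb']; linarith
    have h4 : (((Z.map fun z => z.2).sum : ℕ) : ℝ) ≤ N * wsum Q ((u:ℝ) / 2 ^ n) (Z.map fun z => z.1) := by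
      rw [wsum, List.map_map, ← List.sum_map_mul_left, Nat.cast_list_sum, List.map_map]
      refine list_sum_le_map _ _ _ fun z hz => ?_
      have := (wt_le_iff _ _ _ _ _ _ _ hb hu).1 (hall z hz)
      refine this.trans ?_
      simp only [Function.comp_apply]
      gcongr
      exact wt_mono_Q (by positivity) hq _ _
    have := hw'.trans_le h4
    exact lt_of_mul_lt_mul_left this hN'.le

theorem RE_lt {Q w : ℝ} (hQ : 0 < Q) (hQc : ComputableReal Q) (hw : ComputableReal w) :
    RE fun x : List ℕ × ℕ × ℕ => 1 ≤ x.2.1 ∧ wsum Q ((x.2.1 : ℝ) / 2 ^ x.2.2) x.1 < w := by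
  have h1 : RE fun y : (List ℕ × ℕ × ℕ) × (List (ℕ × ℕ) × ℕ × ℕ × ℕ) =>
      (1 ≤ y.1.2.1 ∧ y.2.1.map (fun z => z.1) = y.1.1 ∧ 1 ≤ y.2.2.1 ∧ 1 ≤ y.2.2.2.1 ∧ 1 ≤ y.2.2.2.2 ∧
        y.2.1.all (fun z => decide (z.1 ^ (y.2.2.2.1 * y.1.2.1) * y.2.2.1 ^ (y.2.2.2.2 * y.1.2.1) ≤
          z.2 ^ (y.2.2.2.2 * y.1.2.1) * 2 ^ (z.1 * 2 ^ y.1.2.2 * y.2.2.2.2))) = true) :=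
    RE.of_prim (by fun_prop)
  have h2 : RE fun y : (List ℕ × ℕ × ℕ) × (List (ℕ × ℕ) × ℕ × ℕ × ℕ) =>
      (y.2.2.2.2 : ℕ) * Q < ((y.2.2.2.1 : ℕ) : ℝ) :=
    hQc.cuts.2.compp (f := fun y : (List ℕ × ℕ × ℕ) × (List (ℕ × ℕ) × ℕ × ℕ × ℕ) =>
      (y.2.2.2.1, y.2.2.2.2)) (by fun_prop)
  have h3 : RE fun y : (List ℕ × ℕ × ℕ) × (List (ℕ × ℕ) × ℕ × ℕ × ℕ) =>
      (((y.2.1.map (fun z => z.2)).sum : ℕ) : ℝ) < (y.2.2.1 : ℝ) * w :=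
    hw.cuts.1.compp (f := fun y : (List ℕ × ℕ × ℕ) × (List (ℕ × ℕ) × ℕ × ℕ × ℕ) =>
      ((y.2.1.map (fun z => z.2)).sum, y.2.2.1)) (by fun_prop)
  refine (h1.and (h2.and h3)).ex.of_iff ?_
  rintro ⟨L, u, n⟩
  simp only [Prod.exists]
  constructor
  · rintro ⟨hu, h⟩
    refine ?_
    set t : ℝ := (u : ℝ) / 2 ^ n with ht
    have hc := (wsum_cont hQ t L).eventually (gt_mem_nhds h)
    obtain ⟨δ, hδ, hδ'⟩ := Metric.eventually_nhds_iff.1 hc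
    obtain ⟨q, hq1, hq2⟩ := exists_rat_btwn (show Q < Q + δ by linarith)
    have hq0 : (0:ℝ) < q := hQ.trans hq1
    have hq0' : 0 < q := by exact_mod_cast hq0
    set a := q.num.toNat with ha
    have hnum : 0 < q.num := Rat.num_pos.2 hq0'
    have ha0 : ((a:ℤ)) = q.num := by omega
    have hqe : (q : ℝ) = (a : ℝ) / q.den := by
      conv_lhs => rw [← Rat.num_div_den q, ← ha0]
      simp
    have hlt := hδ' (y := q) (by rw [Real.dist_eq, abs_lt]; constructor <;> linarith)
    obtain ⟨N, hN⟩ := exists_nat_gt (max 1 (L.length / (w - wsum q t L)))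
    have hN1 : (1:ℝ) < N := (le_max_left _ _).trans_lt hN
    have hN2 := (le_max_right _ _).trans_lt hN
    rw [div_lt_iff₀ (by linarith)] at hN2
    refine ⟨L.map fun l => (l, ⌈(N : ℝ) * wt q t l⌉₊), N, a, q.den, ⟨hu, ?_, ?_, by omega, q.pos, ?_⟩, ?_, ?_⟩
    · simp [Function.comp_def]
    · exact_mod_cast hN1.le
    · simp only [List.all_map, List.all_eq_true, Function.comp_apply, decide_eq_true_eq]
      intro l _
      rw [le_wt_iff _ _ _ _ _ _ _ q.pos hu, ← hqe]
      exact Nat.le_ceil _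
    · rw [hqe, lt_div_iff₀ (by exact_mod_cast q.pos)] at hq1
      linarith
    · have : ∀ L : List ℕ, 
          (((L.map fun l => (l, ⌈(N : ℝ) * wt q t l⌉₊)).map fun z => z.2).sum : ℕ) ≤ 
          (N : ℝ) * wsum q t L + L.length := by
        intro L
        induction L with
        | nil => simp [wsum]
        | cons l L ih =>
          have h5 := (Nat.ceil_lt_add_one (a := (N : ℝ) * wt q t l)
            (mul_nonneg (by positivity) (wt_nonneg _ _ _))).le
          simp only [wsum, List.map_cons, List.sum_cons, List.length_cons] at ih ⊢
          push_cast at ih ⊢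
          linarith
      refine lt_of_le_of_lt (this L) ?_
      linarith
  · rintro ⟨Z, N, a, b, ⟨hu, hZ, hN, ha, hb, hall⟩, hab, hw'⟩
    refine ⟨hu, ?_⟩
    subst hZ
    simp only [List.all_eq_true, decide_eq_true_eq] at hall
    have hN' : (0:ℝ) < N := by exact_mod_cast hN
    have hb' : (0:ℝ) < b := by exact_mod_cast hb
    have hq : Q ≤ (a:ℝ) / b := by rw [le_div_iff₀ hb']; linarith
    have h4 : N * wsum Q ((u:ℝ) / 2 ^ n) (Z.map fun z => z.1) ≤ (((Z.map fun z => z.2).sum : ℕ) : ℝ) := by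
      rw [wsum, List.map_map, ← List.sum_map_mul_left, Nat.cast_list_sum, List.map_map]
      refine list_sum_le_map _ _ _ fun z hz => ?_
      have := (le_wt_iff _ _ _ _ _ _ _ hb hu).1 (hall z hz)
      refine le_trans ?_ this
      simp only [Function.comp_apply]
      gcongr
      exact wt_mono_Q hQ hq _ _
    have := h4.trans_lt hw'
    exact lt_of_mul_lt_mul_left this hN'.le
end Part3

section Part4
theorem stages (f : List Bool →. List Bool) (hf : Partrec f) :
    ∃ D : ℕ → List (List Bool × List Bool), Primrec D ∧
      (∀ k p o, (p, o) ∈ D k → o ∈ f p) ∧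
      (∀ p o, o ∈ f p → ∃ k0, ∀ k ≥ k0, (p, o) ∈ D k) ∧
      (∀ k, ((D k).map Prod.fst).Nodup) := by
  obtain ⟨c, hc⟩ := Nat.Partrec.Code.exists_code.1 hf
  let G : ℕ → ℕ → Option (List Bool × List Bool) := fun k i =>
    (Encodable.decode (α := List Bool) i).bind fun p =>
      (Nat.Partrec.Code.evaln k c (Encodable.encode p)).bind fun y =>
        if Encodable.encode p = i then (Encodable.decode (α := List Bool) y).map fun o => (p, o) else none
  have hG : Primrec₂ G := by
    have a1 : Primrec fun x : ℕ × ℕ => Encodable.decode (α := List Bool) x.2 :=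
      Primrec.decode.comp Primrec.snd
    have a2 : Primrec fun x : (ℕ × ℕ) × List Bool =>
        Nat.Partrec.Code.evaln x.1.1 c (Encodable.encode x.2) :=
      Nat.Partrec.Code.primrec_evaln.comp
        (((Primrec.fst.comp Primrec.fst).pair (Primrec.const c)).pair (Primrec.encode.comp Primrec.snd))
    have a3 : Primrec fun x : ((ℕ × ℕ) × List Bool) × ℕ => Encodable.decode (α := List Bool) x.2 :=
      Primrec.decode.comp Primrec.snd
    have a4 : Primrec fun x : (((ℕ × ℕ) × List Bool) × ℕ) × List Bool => (x.1.1.2, x.2) := by fun_prop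
    have a5 : Primrec fun x : ((ℕ × ℕ) × List Bool) × ℕ => Encodable.encode x.1.2 :=
      Primrec.encode.comp (Primrec.snd.comp Primrec.fst)
    have a6 : Primrec fun x : ((ℕ × ℕ) × List Bool) × ℕ => x.1.1.2 := by fun_prop
    exact Primrec.option_bind a1 (Primrec.option_bind a2
      (Primrec.ite (pr_eq a5 a6).primrecPred (Primrec.option_map a3 a4) (Primrec.const none)))
  have hGm : ∀ k i p o, (p, o) ∈ G k i ↔ Encodable.encode p = i ∧
      ∃ y, y ∈ Nat.Partrec.Code.evaln k c (Encodable.encode p) ∧ Encodable.decode (α := List Bool) y = some o := by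
    intro k i p o
    simp only [G, Option.mem_def, Option.bind_eq_some_iff]
    constructor
    · rintro ⟨p', h1, y, h2, h3⟩
      split_ifs at h3 with h4
      simp only [Option.map_eq_some_iff] at h3
      obtain ⟨o', h3, h5⟩ := h3
      simp only [Prod.mk.injEq] at h5
      obtain ⟨rfl, rfl⟩ := h5
      exact ⟨h4, y, h2, h3⟩
    · rintro ⟨rfl, y, h2, h3⟩
      exact ⟨p, by simp, y, h2, by simp [h3]⟩
  have hm : ∀ k p o, (p, o) ∈ (List.range k).filterMap (G k) ↔ Encodable.encode p < k ∧
      ∃ y, y ∈ Nat.Partrec.Code.evaln k c (Encodable.encode p) ∧ Encodable.decode (α := List Bool) y = some o := by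
    intro k p o
    simp only [List.mem_filterMap, List.mem_range]
    constructor
    · rintro ⟨i, hi, h⟩
      obtain ⟨rfl, h'⟩ := (hGm _ _ _ _).1 h
      exact ⟨hi, h'⟩
    · rintro ⟨hi, h⟩
      exact ⟨_, hi, (hGm _ _ _ _).2 ⟨rfl, h⟩⟩
  refine ⟨fun k => (List.range k).filterMap (G k), Primrec.listFilterMap Primrec.list_range hG, ?_, ?_, ?_⟩
  · intro k p o h
    obtain ⟨_, y, h1, h2⟩ := (hm _ _ _).1 h
    have := Nat.Partrec.Code.evaln_sound h1
    rw [hc] at this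
    simp at this
    obtain ⟨o', h3, h4⟩ := this
    subst h4
    simp at h2
    rwa [← h2]
  · intro p o h
    have : Encodable.encode o ∈ c.eval (Encodable.encode p) := by
      rw [hc]
      simp
      exact h
    obtain ⟨k0, hk0⟩ := Nat.Partrec.Code.evaln_complete.1 this
    refine ⟨max k0 (Encodable.encode p + 1), fun k hk => (hm _ _ _).2 ⟨by omega, _, Nat.Partrec.Code.evaln_mono (by omega) hk0, by simp⟩⟩
  · intro k
    rw [List.map_filterMap]
    refine List.Nodup.filterMap ?_ List.nodup_range
    intro i j p hi hj
    simp only [Option.mem_def, Option.map_eq_some_iff] at hi hj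
    obtain ⟨⟨p1, o1⟩, h1, h2⟩ := hi
    obtain ⟨⟨p2, o2⟩, h3, h4⟩ := hj
    simp only at h2 h4
    subst h2; subst h4
    rw [← ((hGm _ _ _ _).1 h1).1, ← ((hGm _ _ _ _).1 h3).1]

theorem H_le {U : Computer} {s p : List Bool} (h : s ∈ U.f p) : H U s ≤ p.length :=
  Nat.sInf_le ⟨p, rfl, h⟩

def constComp (s : List Bool) : Computer where
  f := fun p => if p = [] then Part.some s else Part.none
  partrec := by
    have h : Computable fun p : List Bool => if p = [] then some s else none :=
      (show Primrec fun p : List Bool => if p = [] then some s else none by fun_prop).to_comp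
    refine h.ofOption.of_eq fun p => ?_
    split_ifs <;> simp
  prefixFree := by
    intro p hp q hq _
    simp only [Set.mem_ofPred_eq] at hp hq
    split_ifs at hp with h1
    · split_ifs at hq with h2
      · rw [h1, h2]
      · exact absurd hq (by simp)
    · exact absurd hp (by simp)

theorem exists_prog {U : Computer} (hU : IsOptimal U) (s : List Bool) : ∃ p, p.length = H U s ∧ s ∈ U.f p := by
  have : {n | ∃ p : List Bool, p.length = n ∧ s ∈ U.f p}.Nonempty := by
    obtain ⟨d, hd⟩ := hU (constComp s)
    obtain ⟨p', _, h⟩ := hd [] (by simp [constComp])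
    exact ⟨_, p', rfl, h s (by simp [constComp])⟩
  exact Nat.sInf_mem this

theorem exists_p0 {U : Computer} (hU : IsOptimal U) : ∃ p o, 1 ≤ p.length ∧ o ∈ U.f p := by
  obtain ⟨p, _, hp⟩ := exists_prog hU []
  obtain ⟨q, _, hq⟩ := exists_prog hU [true]
  by_cases h : p = []
  · refine ⟨q, _, ?_, hq⟩
    rcases q with _ | ⟨a, q⟩
    · subst h
      exact absurd (Part.mem_unique hp hq) (by simp)
    · simp
  · exact ⟨p, _, List.length_pos_iff.2 h, hp⟩

theorem H_comp {U : Computer} (hU : IsOptimal U) (ψ : List Bool →. List Bool) (hψ : Partrec ψ) :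
    ∃ d, ∀ s s', s' ∈ ψ s → H U s' ≤ H U s + d := by
  let C : Computer := ⟨fun p => (U.f p).bind ψ, Partrec.bind U.partrec (hψ.comp Computable.snd), by
    intro p hp q hq
    exact U.prefixFree p (Part.dom_iff_mem.2 (by
      obtain ⟨x, hx⟩ := Part.dom_iff_mem.1 hp
      obtain ⟨y, hy, _⟩ := Part.mem_bind_iff.1 hx
      exact ⟨y, hy⟩)) q (Part.dom_iff_mem.2 (by
      obtain ⟨x, hx⟩ := Part.dom_iff_mem.1 hq
      obtain ⟨y, hy, _⟩ := Part.mem_bind_iff.1 hx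
      exact ⟨y, hy⟩))⟩
  obtain ⟨d, hd⟩ := hU C
  refine ⟨d, fun s s' h => ?_⟩
  obtain ⟨p, hp, hps⟩ := exists_prog hU s
  have hm : s' ∈ C.f p := Part.mem_bind_iff.2 ⟨s, hps, h⟩
  obtain ⟨p', h1, h2⟩ := hd p (Part.dom_iff_mem.2 ⟨_, hm⟩)
  have := H_le (h2 _ hm)
  omega

theorem un_pref {a b : ℕ} {r s : List Bool}
    (h : List.replicate a true ++ false :: r <+: List.replicate b true ++ false :: s) : a = b ∧ r <+: s := by
  induction a generalizing b with
  | zero =>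
    cases b with
    | zero => simpa using h
    | succ b => simp [List.replicate_succ] at h
  | succ a ih =>
    cases b with
    | zero => simp [List.replicate_succ] at h
    | succ b =>
      simp [List.replicate_succ] at h
      have := ih h
      exact ⟨by rw [this.1], this.2⟩
end Part4

section Part5
def pcode (y : ℕ × ℕ × List Bool) : List Bool :=
  List.replicate y.1.unpair.1 true ++ false :: (List.replicate y.1.unpair.2 true ++ false ::
    (List.replicate y.2.1 true ++ false :: y.2.2))

theorem pcode_pr : Primrec pcode := by unfold pcode; fun_prop

theorem pcode_pref {y z : ℕ × ℕ × List Bool} (h : pcode y <+: pcode z) :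
    y.1 = z.1 ∧ y.2.1 = z.2.1 ∧ y.2.2 <+: z.2.2 := by
  obtain ⟨h1, h⟩ := un_pref h
  obtain ⟨h2, h⟩ := un_pref h
  obtain ⟨h3, h⟩ := un_pref h
  refine ⟨?_, h3, h⟩
  rw [← Nat.pair_unpair y.1, ← Nat.pair_unpair z.1, h1, h2]

theorem unpair_sqrt (n : ℕ) : n.unpair.1 ≤ n.sqrt ∧ n.unpair.2 ≤ n.sqrt := by
  have := Nat.sqrt_le_add n
  unfold Nat.unpair
  simp only
  split_ifs <;> simp <;> omega

theorem H_desc {U : Computer} (hU : IsOptimal U) (m : ℕ → ℕ) (hm : Primrec m)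
    (ψ : ℕ × ℕ × List Bool →. List Bool) (hψ : Partrec ψ) :
    ∃ d, ∀ n c x s, x.length = m n → s ∈ ψ (n, c, x) → H U s ≤ 2 * n.sqrt + c + m n + d := by
  have hR : RE fun q : List Bool × (ℕ × ℕ × List Bool) => q.1 = pcode q.2 ∧ q.2.2.2.length = m q.2.1 := by
    apply RE.of_prim
    have := pcode_pr
    fun_prop
  obtain ⟨φ, hφ, h1, h2⟩ := hR.choose
  have hb : ∀ p, ((φ p).bind ψ).Dom → ∃ y, p = pcode y ∧ y.2.2.length = m y.1 := by
    intro p hp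
    obtain ⟨x, hx⟩ := Part.dom_iff_mem.1 hp
    obtain ⟨y, hy, _⟩ := Part.mem_bind_iff.1 hx
    exact ⟨y, h1 _ _ hy⟩
  let C : Computer := ⟨fun p => (φ p).bind ψ, Partrec.bind hφ (hψ.comp Computable.snd), by
    intro p hp q hq hpq
    obtain ⟨y, rfl, hy⟩ := hb p hp
    obtain ⟨z, rfl, hz⟩ := hb q hq
    obtain ⟨h1, h2, h3⟩ := pcode_pref hpq
    have h4 : y.2.2 = z.2.2 := h3.eq_of_length (by rw [hy, hz, h1])
    congr 1
    ext1
    · exact h1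
    · ext1
      · exact h2
      · exact h4⟩
  obtain ⟨d, hd⟩ := hU C
  refine ⟨d + 3, fun n c x s hx hs => ?_⟩
  have hm : s ∈ C.f (pcode (n, c, x)) := by
    have hdom := h2 (pcode (n, c, x)) ⟨(n, c, x), rfl, hx⟩
    have h3 := h1 _ _ (Part.get_mem hdom)
    have h4 : (φ (pcode (n, c, x))).get hdom = (n, c, x) := by
      have h5 := h3.1
      simp only at h5
      obtain ⟨e1, e2, e3⟩ := pcode_pref (y := (n, c, x)) (z := (φ (pcode (n, c, x))).get hdom) ⟨[], by rw [List.append_nil]; exact h5⟩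
      have e4 := e3.eq_of_length (by 
        have := h3.2
        simp only at this
        rw [this, ← e1]; exact hx)
      ext1
      · exact e1.symm
      · ext1
        · exact e2.symm
        · exact e4.symm
    refine Part.mem_bind_iff.2 ⟨(n, c, x), ?_, hs⟩
    have := Part.get_mem hdom
    rwa [h4] at this
  obtain ⟨p', h3, h4⟩ := hd _ (Part.dom_iff_mem.2 ⟨_, hm⟩)
  have h5 := H_le (h4 _ hm)
  have h6 := unpair_sqrt n
  have h7 : (pcode (n, c, x)).length = n.unpair.1 + n.unpair.2 + c + m n + 3 := by
    simp [pcode, hx]; omega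
  omega

def tobits (y : ℕ × ℕ) : List Bool :=
  (List.range y.1).map fun i => decide ((y.2 / 2 ^ (y.1 - 1 - i)) % 2 = 1)

theorem tobits_pr : Primrec tobits := by unfold tobits; fun_prop

theorem tobits_length (n j : ℕ) : (tobits (n, j)).length = n := by simp [tobits]

def val (s : List Bool) : ℕ := s.foldl (fun a b => 2 * a + if b = true then 1 else 0) 0

theorem val_pr : Primrec val := by
  unfold val
  refine Primrec.list_foldl (f := fun s : List Bool => s) (g := fun _ => 0)
    (h := fun (_ : List Bool) (p : ℕ × Bool) => 2 * p.1 + if p.2 = true then 1 else 0) Primrec.id (Primrec.const 0) ?_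
  show Primrec fun q : List Bool × ℕ × Bool => 2 * q.2.1 + if q.2.2 = true then 1 else 0
  fun_prop

theorem tobits_succ (n j : ℕ) : tobits (n+1, j) = tobits (n, j / 2) ++ [decide (j % 2 = 1)] := by
  unfold tobits
  simp only
  rw [List.range_succ, List.map_append]
  congr 1
  · apply List.map_congr_left
    intro i hi
    have := List.mem_range.1 hi
    rw [Nat.div_div_eq_div_mul, ← pow_succ', show n + 1 - 1 - i = n - 1 - i + 1 by omega]
  · simp

theorem val_tobits (n j : ℕ) (h : j < 2 ^ n) : val (tobits (n, j)) = j := by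
  induction n generalizing j with
  | zero => simp at h; subst h; simp [tobits, val]
  | succ n ih =>
    have h1 : val (tobits (n, j / 2)) = j / 2 := ih _ (by rw [pow_succ] at h; omega)
    rw [tobits_succ]
    unfold val at *
    rw [List.foldl_append, h1]
    simp
    split_ifs <;> omega

theorem bits_eq {T : ℝ} (h0 : 0 ≤ T) (h1 : T < 1) (n : ℕ) : bits T n = tobits (n, ⌊T * 2 ^ n⌋₊) := by
  unfold bits tobits binDigit
  apply List.map_congr_left
  intro i hi
  have hi := List.mem_range.1 hi
  simp only at hi ⊢
  rw [Int.fract_eq_self.2 ⟨h0, h1⟩, decide_eq_decide]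
  have e : T * 2 ^ (i+1) = T * 2 ^ n / ((2 ^ (n - 1 - i) : ℕ) : ℝ) := by
    have : (2:ℝ) ^ n = 2 ^ (i+1) * 2 ^ (n - 1 - i) := by rw [← pow_add]; congr 1; omega
    rw [this]; push_cast; field_simp
  have e2 : ⌊T * 2 ^ (i+1)⌋ = ((⌊T * 2 ^ n⌋₊ / 2 ^ (n - 1 - i) : ℕ) : ℤ) := by
    rw [← Nat.floor_div_natCast, ← e, Int.natCast_floor_eq_floor (by positivity)]
  rw [e2]
  omega

theorem val_bits {T : ℝ} (h0 : 0 ≤ T) (h1 : T < 1) (n : ℕ) : val (bits T n) = ⌊T * 2 ^ n⌋₊ := by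
  rw [bits_eq h0 h1, val_tobits]
  rw [Nat.floor_lt (by positivity)]
  push_cast
  have : (0:ℝ) < 2 ^ n := by positivity
  nlinarith

theorem pf_ud {S : Set (List Bool)} (h : PrefixFree S) (hn : [] ∉ S) : InformationTheory.UniquelyDecodable S := by
  intro L₁ 
  induction L₁ with
  | nil =>
    intro L₂ h1 h2 h3
    cases L₂ with
    | nil => rfl
    | cons a L =>
      simp at h3
      have := h2 a (by simp)
      rw [h3.1] at this
      exact absurd this hn
  | cons a L ih =>
    intro L₂ h1 h2 h3
    cases L₂ with
    | nil =>
      simp at h3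
      have := h1 a (by simp)
      rw [h3.1] at this
      exact absurd this hn
    | cons b L' =>
      simp only [List.flatten_cons] at h3
      have hab : a = b := by
        have ha := h1 a (by simp)
        have hb := h2 b (by simp)
        rcases List.prefix_or_prefix_of_prefix (l₁ := a) (l₂ := b) (l₃ := a ++ L.flatten)
          (List.prefix_append _ _) (by rw [h3]; exact List.prefix_append _ _) with h4 | h4
        · exact h a ha b hb h4
        · exact (h b hb a ha h4).symm
      subst hab
      rw [ih L' (fun w hw => h1 w (by simp [hw])) (fun w hw => h2 w (by simp [hw])) (List.append_cancel_left h3)]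

theorem kraft {U : Computer} (hU : IsOptimal U) (S : Finset (List Bool)) (hS : ∀ p ∈ S, (U.f p).Dom) :
    ∑ p ∈ S, (1 / 2 : ℝ) ^ p.length ≤ 1 := by
  have hn : [] ∉ (S : Set (List Bool)) := by
    intro h
    obtain ⟨p, o, h1, h2⟩ := exists_p0 hU
    have := U.prefixFree [] (hS _ h) p (Part.dom_iff_mem.2 ⟨_, h2⟩) List.nil_prefix
    subst this
    simp at h1
  have hp : PrefixFree (S : Set (List Bool)) := fun p hp q hq => U.prefixFree p (hS p hp) q (hS q hq)
  have := InformationTheory.kraft_mcmillan_inequality (pf_ud hp hn)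
  simpa using this

theorem nil_not_dom {U : Computer} (hU : IsOptimal U) {p : List Bool} (h : (U.f p).Dom) : 1 ≤ p.length := by
  by_contra hc
  have : p = [] := by simpa using hc
  subst this
  obtain ⟨p, o, h1, h2⟩ := exists_p0 hU
  have := U.prefixFree [] h p (Part.dom_iff_mem.2 ⟨_, h2⟩) List.nil_prefix
  subst this
  simp at h1
end Part5

section Part6
theorem rpow_bound (q ε : ℝ) (hε : 0 < ε) : ∃ C : ℝ, 0 < C ∧ ∀ l : ℕ, (l:ℝ) ^ q * (2:ℝ) ^ (-(l:ℝ) * ε) ≤ C := by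
  have h := (tendsto_rpow_mul_exp_neg_mul_atTop_nhds_zero q (Real.log 2 * ε)
    (by have := Real.log_pos one_lt_two; positivity)).comp tendsto_natCast_atTop_atTop
  obtain ⟨C, hC⟩ := h.bddAbove_range
  refine ⟨max C 1, by positivity, fun l => le_max_of_le_left ?_⟩
  have := hC ⟨l, rfl⟩
  simp only [Function.comp] at this
  rw [Real.rpow_def_of_pos two_pos]
  convert this using 3
  ring

theorem wt_bound (q t : ℝ) (ht : 0 < t) (ht1 : t < 1) : ∃ C : ℝ, 0 < C ∧ ∀ l : ℕ, wt q t l ≤ C * (1/2:ℝ)^l := by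
  obtain ⟨C, hC, h⟩ := rpow_bound q (1/t - 1) (by rw [sub_pos]; exact (one_lt_div ht).2 ht1)
  refine ⟨C, hC, fun l => ?_⟩
  have e : (1/2:ℝ)^l = (2:ℝ)^(-(l:ℝ)) := by
    rw [Real.rpow_neg two_pos.le, Real.rpow_natCast]; simp
  have : wt q t l = (l:ℝ) ^ q * (2:ℝ) ^ (-(l:ℝ) * (1/t-1)) * (1/2:ℝ)^l := by
    unfold wt
    rw [e, mul_assoc, ← Real.rpow_add two_pos]
    congr 2; ring
  rw [this]
  exact mul_le_mul_of_nonneg_right (h l) (by positivity)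

theorem wt_sum_bound {U : Computer} (hU : IsOptimal U) (q t : ℝ) (ht : 0 < t) (ht1 : t < 1) :
    ∃ C : ℝ, 0 < C ∧ ∀ S : Finset (List Bool), (∀ p ∈ S, (U.f p).Dom) → ∑ p ∈ S, wt q t p.length ≤ C := by
  obtain ⟨C, hC, h⟩ := wt_bound q t ht ht1
  refine ⟨C, hC, fun S hS => ?_⟩
  calc ∑ p ∈ S, wt q t p.length ≤ ∑ p ∈ S, C * (1/2:ℝ)^p.length := Finset.sum_le_sum fun p _ => h _
    _ = C * ∑ p ∈ S, (1/2:ℝ)^p.length := by rw [Finset.mul_sum]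
    _ ≤ C * 1 := mul_le_mul_of_nonneg_left (kraft hU S hS) hC.le
    _ = C := mul_one _

theorem sum_sub {U : Computer} (q t : ℝ) (A : Finset U.domain) :
    ∑ p ∈ A, wterm U q t p = ∑ p ∈ A.map (Function.Embedding.subtype _), wt q t p.length := by
  rw [Finset.sum_map]; rfl

theorem sum_le_w {U : Computer} (hU : IsOptimal U) (q t : ℝ) (ht : 0 < t) (ht1 : t < 1) 
    (S : Finset (List Bool)) (hS : ∀ p ∈ S, (U.f p).Dom) :
    ∑ p ∈ S, wt q t p.length ≤ ∑' p, wterm U q t p := by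
  obtain ⟨C, hC, h⟩ := wt_sum_bound hU q t ht ht1
  have hs : Summable (wterm U q t) := by
    refine summable_of_sum_le (c := C) (fun p => wt_nonneg q t p.1.length) fun A => ?_
    rw [sum_sub]
    refine h _ fun p hp => ?_
    obtain ⟨a, _, rfl⟩ := Finset.mem_map.1 hp
    exact a.2
  classical
  let A : Finset U.domain := S.subtype (fun p => p ∈ U.domain)
  have hA : ∑ p ∈ S, wt q t p.length = ∑ p ∈ A, wterm U q t p :=
    (Finset.sum_subtype_of_mem (fun p : List Bool => wt q t p.length) hS).symm
  rw [hA]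
  exact hs.sum_le_tsum A fun p _ => wt_nonneg q t p.1.length

theorem w_le {U : Computer} (q t : ℝ) (B : ℝ)
    (h : ∀ S : Finset (List Bool), (∀ p ∈ S, (U.f p).Dom) → ∑ p ∈ S, wt q t p.length ≤ B) :
    ∑' p, wterm U q t p ≤ B := by
  have h' : ∀ A : Finset U.domain, ∑ p ∈ A, wterm U q t p ≤ B := by
    intro A
    rw [sum_sub]
    refine h _ fun p hp => ?_
    obtain ⟨a, _, rfl⟩ := Finset.mem_map.1 hp
    exact a.2
  have h0 : ∀ p, 0 ≤ wterm U q t p := fun p => wt_nonneg q t p.1.length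
  have hs : Summable (wterm U q t) := summable_of_sum_le h0 h'
  exact hs.tsum_le_of_sum_le h'

theorem wt_mono_t {Q s t : ℝ} (hs : 0 < s) (hst : s ≤ t) (l : ℕ) : wt Q s l ≤ wt Q t l := by
  unfold wt
  apply mul_le_mul_of_nonneg_left _ (by positivity)
  apply Real.rpow_le_rpow_of_exponent_le one_le_two
  rw [neg_div, neg_div, neg_le_neg_iff]
  exact div_le_div_of_nonneg_left (by positivity) hs hst

theorem wt_upper {Q T t t1 : ℝ} (hT : 0 < T) (ht : T ≤ t) (ht1 : t ≤ t1) (l : ℕ) :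
    wt Q t l - wt Q T l ≤ (t - T) * (1 / T^2) * wt (Q+1) t1 l := by
  rcases Nat.eq_zero_or_pos l with rfl | hl
  · have h0 : ∀ a b : ℝ, wt a b 0 = (0:ℝ)^a := by intro a b; simp [wt]
    rw [h0, h0, h0, sub_self]
    have := Real.zero_rpow_nonneg (Q+1)
    have : 0 ≤ t - T := by linarith
    positivity
  have hl' : (0:ℝ) < l := by exact_mod_cast hl
  have ht0 : 0 < t := by linarith
  have e1 : (2:ℝ) ^ (-(l:ℝ)/T) = 2 ^ (-(l:ℝ)/t) * Real.exp (-(Real.log 2 * (l * (t - T) / (t*T)))) := by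
    rw [Real.rpow_def_of_pos two_pos, Real.rpow_def_of_pos two_pos, ← Real.exp_add]
    congr 1; field_simp; ring
  have e2 : (2:ℝ) ^ (-(l:ℝ)/t) - (2:ℝ) ^ (-(l:ℝ)/T) ≤ 2 ^ (-(l:ℝ)/t1) * (l * (t-T) * (1/T^2)) := by
    rw [e1]
    set x := Real.log 2 * (l * (t - T) / (t*T)) with hx
    have h1 := Real.add_one_le_exp (-x)
    have hd : 0 ≤ t - T := by linarith
    have h2 : x ≤ l * (t-T) * (1/T^2) := by
      have h3 : l * (t - T) / (t*T) ≤ l * (t-T) * (1/T^2) := by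
        rw [mul_one_div]
        apply div_le_div_of_nonneg_left (by positivity) (by positivity)
        nlinarith
      have h4 : 0 ≤ l * (t - T) / (t*T) := by positivity
      have h5 : Real.log 2 ≤ 1 := by have := Real.log_two_lt_d9; linarith
      nlinarith
    have h3 : (2:ℝ) ^ (-(l:ℝ)/t) ≤ 2 ^ (-(l:ℝ)/t1) := by
      apply Real.rpow_le_rpow_of_exponent_le one_le_two
      rw [neg_div, neg_div, neg_le_neg_iff]
      exact div_le_div_of_nonneg_left (by positivity) ht0 ht1
    have hp : (0:ℝ) < 2 ^ (-(l:ℝ)/t) := by positivity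
    calc _ = 2 ^ (-(l:ℝ)/t) * (1 - Real.exp (-x)) := by ring
      _ ≤ 2 ^ (-(l:ℝ)/t) * (l * (t-T) * (1/T^2)) := by
        apply mul_le_mul_of_nonneg_left _ hp.le; linarith
      _ ≤ _ := mul_le_mul_of_nonneg_right h3 (by positivity)
  unfold wt
  rw [Real.rpow_add_one hl'.ne']
  have hq : 0 ≤ (l:ℝ)^Q := by positivity
  have := mul_le_mul_of_nonneg_left e2 hq
  nlinarith

theorem sum_upper {U : Computer} (hU : IsOptimal U) {Q T t1 : ℝ} (hT : 0 < T) (hTt : T ≤ t1) (ht1 : t1 < 1) :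
    ∃ C : ℝ, 0 < C ∧ ∀ t, T ≤ t → t ≤ t1 → ∀ S : Finset (List Bool), (∀ p ∈ S, (U.f p).Dom) →
      ∑ p ∈ S, wt Q t p.length ≤ ∑ p ∈ S, wt Q T p.length + C * (t - T) := by
  obtain ⟨C, hC, h⟩ := wt_sum_bound hU (Q+1) t1 (by linarith) ht1
  refine ⟨C * (1/T^2), by positivity, fun t h1 h2 S hS => ?_⟩
  have : ∑ p ∈ S, wt Q t p.length - ∑ p ∈ S, wt Q T p.length ≤ (t - T) * (1/T^2) * C := by
    rw [← Finset.sum_sub_distrib]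
    calc _ ≤ ∑ p ∈ S, (t - T) * (1 / T^2) * wt (Q+1) t1 p.length :=
          Finset.sum_le_sum fun p _ => wt_upper hT h1 h2 _
      _ = (t - T) * (1 / T^2) * ∑ p ∈ S, wt (Q+1) t1 p.length := by rw [Finset.mul_sum]
      _ ≤ _ := mul_le_mul_of_nonneg_left (h S hS) (by
          have : 0 ≤ t - T := by linarith
          positivity)
  linarith

theorem wt_lower {Q T : ℝ} (hT : 0 < T) {l : ℕ} (hl : 1 ≤ l) :
    ∃ c : ℝ, 0 < c ∧ ∀ s t, T ≤ s → s ≤ t → t ≤ 1 → wt Q s l + c * (t - s) ≤ wt Q t l := by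
  have hl' : (0:ℝ) < l := by exact_mod_cast hl
  have hlog := Real.log_pos one_lt_two
  refine ⟨(l:ℝ)^Q * 2 ^ (-(l:ℝ)/T) * (Real.log 2 * l), by positivity, fun s t h1 h2 h3 => ?_⟩
  have hs : 0 < s := by linarith
  have ht : 0 < t := by linarith
  have e1 : (2:ℝ) ^ (-(l:ℝ)/t) = 2 ^ (-(l:ℝ)/s) * Real.exp (Real.log 2 * (l * (t - s) / (t*s))) := by
    rw [Real.rpow_def_of_pos two_pos, Real.rpow_def_of_pos two_pos, ← Real.exp_add]
    congr 1; field_simp; ring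
  have hd : 0 ≤ t - s := by linarith
  have h4 : l * (t - s) ≤ l * (t - s) / (t*s) := by
    rw [le_div_iff₀ (by positivity)]
    have : t * s ≤ 1 := by nlinarith
    have : 0 ≤ l * (t-s) := by positivity
    nlinarith
  have h5 := Real.add_one_le_exp (Real.log 2 * (l * (t - s) / (t*s)))
  have h6 : (2:ℝ) ^ (-(l:ℝ)/T) ≤ 2 ^ (-(l:ℝ)/s) := by
    apply Real.rpow_le_rpow_of_exponent_le one_le_two
    rw [neg_div, neg_div, neg_le_neg_iff]
    exact div_le_div_of_nonneg_left (by positivity) hT h1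
  unfold wt
  rw [e1]
  have hq : 0 ≤ (l:ℝ)^Q := by positivity
  have hp : (0:ℝ) < 2 ^ (-(l:ℝ)/s) := by positivity
  have h7 : Real.log 2 * (l * (t-s)) ≤ Real.log 2 * (l * (t - s) / (t*s)) := mul_le_mul_of_nonneg_left h4 hlog.le
  have h8 : 2 ^ (-(l:ℝ)/T) * (Real.log 2 * (l * (t-s))) ≤ 2 ^ (-(l:ℝ)/s) * (Real.exp (Real.log 2 * (l * (t - s) / (t*s))) - 1) := by
    apply mul_le_mul h6 (by linarith) (by positivity) hp.le
  have h9 := mul_le_mul_of_nonneg_left h8 hq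
  nlinarith

theorem wt_strict {Q s t : ℝ} (hs : 0 < s) (hst : s < t) {l : ℕ} (hl : 1 ≤ l) : wt Q s l < wt Q t l := by
  have hl' : (0:ℝ) < l := by exact_mod_cast hl
  unfold wt
  apply mul_lt_mul_of_pos_left _ (by positivity)
  apply Real.rpow_lt_rpow_of_exponent_lt one_lt_two
  rw [neg_div, neg_div, neg_lt_neg_iff]
  exact div_lt_div_of_pos_left (by positivity) hs hst

theorem sum_mono_t {Q s t : ℝ} (hs : 0 < s) (hst : s ≤ t) (S : Finset (List Bool)) :
    ∑ p ∈ S, wt Q s p.length ≤ ∑ p ∈ S, wt Q t p.length := Finset.sum_le_sum fun _ _ => wt_mono_t hs hst _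

theorem exists_S {U : Computer} (hU : IsOptimal U) {Q T t : ℝ} (hT : 0 < T) (ht : T < t) :
    ∃ S : Finset (List Bool), (∀ p ∈ S, (U.f p).Dom) ∧ ∑' p, wterm U Q T p < ∑ p ∈ S, wt Q t p.length := by
  obtain ⟨p0, o, h1, h2⟩ := exists_p0 hU
  have hd := wt_strict (Q := Q) hT ht h1
  by_contra hc
  push Not at hc
  have hp : (U.f p0).Dom := Part.dom_iff_mem.2 ⟨_, h2⟩
  set w := ∑' p, wterm U Q T p with hw
  have : w ≤ w - (wt Q t p0.length - wt Q T p0.length) := by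
    conv_lhs => rw [hw]
    apply w_le
    intro S hS
    have h3 := hc (insert p0 S) (by simpa using ⟨hp, hS⟩)
    have h4 : ∑ p ∈ insert p0 S, wt Q T p.length + (wt Q t p0.length - wt Q T p0.length) ≤ 
        ∑ p ∈ insert p0 S, wt Q t p.length := by
      have h5 : p0 ∈ insert p0 S := by simp
      rw [← Finset.add_sum_erase _ _ h5, ← Finset.add_sum_erase _ (fun p => wt Q t p.length) h5]
      have := sum_mono_t (Q := Q) hT ht.le ((insert p0 S).erase p0)
      linarith
    have h5 : ∑ p ∈ S, wt Q T p.length ≤ ∑ p ∈ insert p0 S, wt Q T p.length :=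
      Finset.sum_le_sum_of_subset_of_nonneg (by simp) fun _ _ _ => wt_nonneg _ _ _
    linarith
  linarith
end Part6

section Part7
/-- A stage-wise enumeration of the graph of a computer. -/
structure Stg (U : Computer) where
  D : ℕ → List (List Bool × List Bool)
  pr : Primrec D
  sound : ∀ k p o, (p, o) ∈ D k → o ∈ U.f p
  compl : ∀ p o, o ∈ U.f p → ∃ k0, ∀ k ≥ k0, (p, o) ∈ D k
  nodup : ∀ k, ((D k).map Prod.fst).Nodup

namespace Stg
variable {U : Computer} (G : Stg U)

def L (k : ℕ) : List ℕ := (G.D k).map fun x => x.1.length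

def S (k : ℕ) : Finset (List Bool) := ((G.D k).map Prod.fst).toFinset

theorem L_pr : Primrec G.L := by
  have := G.pr
  unfold L
  fun_prop

theorem mem_S {k : ℕ} {p : List Bool} : p ∈ G.S k ↔ ∃ o, (p, o) ∈ G.D k := by
  simp [S]

theorem S_dom (k : ℕ) : ∀ p ∈ G.S k, (U.f p).Dom := by
  intro p hp
  obtain ⟨o, ho⟩ := G.mem_S.1 hp
  exact Part.dom_iff_mem.2 ⟨o, G.sound _ _ _ ho⟩

theorem S_sub (A : Finset (List Bool)) (hA : ∀ p ∈ A, (U.f p).Dom) : ∃ k0, ∀ k ≥ k0, A ⊆ G.S k := by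
  induction A using Finset.induction_on with
  | empty => exact ⟨0, fun k _ => by simp⟩
  | insert a A _ ih =>
    obtain ⟨k0, h0⟩ := ih fun p hp => hA p (by simp [hp])
    obtain ⟨o, ho⟩ := Part.dom_iff_mem.1 (hA a (by simp))
    obtain ⟨k1, h1⟩ := G.compl a o ho
    refine ⟨max k0 k1, fun k hk => ?_⟩
    rw [Finset.insert_subset_iff]
    exact ⟨G.mem_S.2 ⟨o, h1 k (by omega)⟩, h0 k (by omega)⟩

theorem map_sum {f : ℕ → ℝ} (k : ℕ) : ((G.L k).map f).sum = ∑ p ∈ G.S k, f p.length := by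
  unfold S L
  rw [List.sum_toFinset _ (G.nodup k), List.map_map, List.map_map]
  rfl

theorem wsum_L (Q t : ℝ) (k : ℕ) : wsum Q t (G.L k) = ∑ p ∈ G.S k, wt Q t p.length := G.map_sum k

theorem gt_iff (hU : IsOptimal U) {Q T : ℝ} (hT : 0 < T) (hT1 : T < 1) {t : ℝ} (ht : 0 < t) :
    T < t ↔ ∃ k, ∑' p, wterm U Q T p < wsum Q t (G.L k) := by
  constructor
  · intro h
    obtain ⟨A, hA, h⟩ := exists_S hU (Q := Q) hT h
    obtain ⟨k, hk⟩ := G.S_sub A hA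
    refine ⟨k, ?_⟩
    rw [G.wsum_L]
    exact h.trans_le (Finset.sum_le_sum_of_subset_of_nonneg (hk k le_rfl) fun _ _ _ => wt_nonneg _ _ _)
  · rintro ⟨k, hk⟩
    by_contra hc
    rw [G.wsum_L] at hk
    have := sum_mono_t (Q := Q) ht (not_lt.1 hc) (G.S k)
    have := sum_le_w hU Q T hT hT1 (G.S k) (G.S_dom k)
    linarith

end Stg

theorem Stg.RE_A {U : Computer} (G : Stg U) (hU : IsOptimal U) {Q T : ℝ} (hQ : 0 < Q) (hQc : ComputableReal Q) (hT : 0 < T) (hT1 : T < 1)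
    (hW : ComputableReal (∑' p, wterm U Q T p)) :
    RE fun y : ℕ × ℕ => 1 ≤ y.1 ∧ T < (y.1:ℝ) / 2 ^ y.2 := by
  have hL := G.L_pr
  have h := ((RE_gt hQ hQc hW).compp (f := fun x : (ℕ × ℕ) × ℕ => (G.L x.2, x.1.1, x.1.2)) (by fun_prop)).ex
  refine h.of_iff fun y => ?_
  by_cases hy : 1 ≤ y.1
  · simp only [hy, true_and]
    exact G.gt_iff hU hT hT1 (by positivity)
  · simp [hy]

theorem right_comp {T : ℝ} (hT : 0 < T) (hT1 : T < 1) (h : RE fun y : ℕ × ℕ => 1 ≤ y.1 ∧ T < (y.1:ℝ) / 2 ^ y.2) :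
    RightComputable T := by
  obtain ⟨F, hF, h1, h2⟩ := (h.compp (f := fun x : Unit × (ℕ × ℕ) => x.2) (by fun_prop)).search_aux
  let F' : ℕ → ℕ × ℕ := fun n => (F () n).getD (1, 0)
  have hF' : Computable F' := by
    have a : Computable fun n => F () n := hF.comp (Computable.const ()) Computable.id
    exact Primrec.option_getD.to_comp.comp a (Computable.const (1, 0))
  have F1 : ∀ n, T < ((F' n).1:ℝ) / 2 ^ (F' n).2 := by
    intro n
    simp only [F']
    cases hh : F () n with
    | none => simpa using hT1
    | some y => exact (h1 () n y hh).2
  have F2 : ∀ y : ℕ × ℕ, 1 ≤ y.1 → T < (y.1:ℝ) / 2 ^ y.2 → ∃ n, F' n = y := by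
    intro y h3 h4
    obtain ⟨n, hn⟩ := h2 () y ⟨h3, h4⟩
    refine ⟨n, ?_⟩
    simp only [F', Option.mem_def.1 hn, Option.getD_some]
  let mn : (ℕ × ℕ) × (ℕ × ℕ) → ℕ × ℕ := fun y => if y.1.1 * 2 ^ y.2.2 < y.2.1 * 2 ^ y.1.2 then y.1 else y.2
  have hmn : Primrec mn := by
    simp only [mn]; fun_prop
  let v : ℕ × ℕ → ℝ := fun y => (y.1:ℝ) / 2 ^ y.2
  have vmn : ∀ a b, v (mn (a, b)) = min (v a) (v b) := by
    intro a b
    have : a.1 * 2 ^ b.2 < b.1 * 2 ^ a.2 ↔ v a < v b := by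
      simp only [v]
      rw [div_lt_div_iff₀ (by positivity) (by positivity)]
      exact_mod_cast Iff.rfl
    simp only [mn]
    split_ifs with h
    · rw [min_eq_left (this.1 h).le]
    · rw [min_eq_right (not_lt.1 fun h' => h (this.2 h'))]
  let st : ℕ → ℕ × ℕ := fun n => Nat.rec (motive := fun _ => ℕ × ℕ) (1, 0) (fun n r => mn (F' n, r)) n
  have hst : Computable st := by
    refine Computable.nat_rec (f := fun n : ℕ => n) (g := fun _ : ℕ => ((1, 0) : ℕ × ℕ))
      (h := fun (_ : ℕ) (y : ℕ × (ℕ × ℕ)) => mn (F' y.1, y.2)) Computable.id (Computable.const _) ?_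
    have a1 : Computable fun y : ℕ × (ℕ × (ℕ × ℕ)) => F' y.2.1 :=
      hF'.comp (Computable.fst.comp Computable.snd)
    exact hmn.to_comp.comp (cp_pair a1 (Computable.snd.comp Computable.snd))
  have s1 : ∀ n, v (st (n+1)) = min (v (F' n)) (v (st n)) := fun n => vmn _ _
  have s2 : ∀ n, T < v (st n) := by
    intro n
    induction n with
    | zero => simpa [st, v] using hT1
    | succ n ih => rw [s1]; exact lt_min (F1 n) ih
  have s3 : Antitone fun n => v (st n) := antitone_nat_of_succ_le fun n => by
    simp only [s1]; exact min_le_right _ _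
  have hv : ∀ n, ((((st n).1 : ℚ) / 2 ^ (st n).2 : ℚ) : ℝ) = v (st n) := by
    intro n; simp [v]
  refine ⟨fun n => ((st n).1 : ℚ) / 2 ^ (st n).2, dyadic_comp.comp hst, fun n => ?_, ?_⟩
  · rw [hv]; exact (s2 n).le
  · simp_rw [hv]
    rw [Metric.tendsto_atTop]
    intro ε hε
    obtain ⟨N, hN⟩ := exists_pow_lt_of_lt_one hε (show (1/2:ℝ) < 1 by norm_num)
    have hN2 : (0:ℝ) < 2 ^ N := by positivity
    obtain ⟨n, hn⟩ := F2 (⌊T * 2 ^ N⌋₊ + 1, N) (by simp) (by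
      rw [lt_div_iff₀ hN2]; push_cast; exact Nat.lt_floor_add_one _)
    refine ⟨n + 1, fun k hk => ?_⟩
    have h3 : v (st k) ≤ v (F' n) := (s3 hk).trans (by simp only [s1]; exact min_le_left _ _)
    have h4 : v (F' n) ≤ T + (1/2)^N := by
      rw [hn]
      simp only [v]
      rw [div_le_iff₀ hN2, add_mul, ← mul_pow]
      have := Nat.floor_le (show 0 ≤ T * 2 ^ N by positivity)
      push_cast
      norm_num
      linarith
    rw [Real.dist_eq, abs_lt]
    have := s2 k
    constructor <;> linarith
end Part7

section Part8
theorem half_pow_eq (n : ℕ) : ((1/2:ℝ))^n = 1 / 2 ^ n := by simp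

theorem rand_aux {U : Computer} (G : Stg U) (hU : IsOptimal U) {Q T : ℝ} (hQ : 0 < Q) (hQc : ComputableReal Q)
    (hT : 0 < T) (hT1 : T < 1) (hW : ComputableReal (∑' p, wterm U Q T p)) :
    ∃ (d n0 : ℕ) (C : ℝ), 0 < C ∧ ∀ n ≥ n0, ∃ h : ℕ, 1 ≤ h ∧ h ≤ H U (bits T n) + d ∧ wt Q T h ≤ C * (1/2)^n := by
  have hL := G.L_pr
  have hv := val_pr
  have hD := G.pr
  obtain ⟨φ, hφ, h1, h2⟩ := ((RE_gt hQ hQc hW).compp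
    (f := fun x : List Bool × ℕ => (G.L x.2, val x.1 + 1, x.1.length)) (by fun_prop)).choose
  let out : ℕ → List Bool := fun k => ((G.D k).map fun x => x.2).flatten ++ [true]
  have hout : Primrec out := by
    have a : Primrec fun k => ((G.D k).map fun x => x.2) := by fun_prop
    have b : Primrec fun k => ((G.D k).map fun x => x.2).flatten := Primrec.list_flatten.comp a
    simp only [out]; fun_prop
  obtain ⟨d, hd⟩ := H_comp hU (fun s => (φ s).map out)
    (hφ.map (hout.to_comp.comp Computable.snd))
  obtain ⟨C, hC, hup⟩ := sum_upper hU (Q := Q) (t1 := (1+T)/2) hT (by linarith) (by linarith)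
  obtain ⟨n0, hn0⟩ := exists_pow_lt_of_lt_one (show 0 < (1 - T)/2 by linarith) (show (1/2:ℝ) < 1 by norm_num)
  refine ⟨d, n0, C, hC, fun n hn => ?_⟩
  have hn1 : (1/2:ℝ)^n ≤ (1-T)/2 := (pow_le_pow_of_le_one (by norm_num) (by norm_num) hn).trans hn0.le
  set s := bits T n with hs
  have hlen : s.length = n := by simp [hs, bits]
  have hval : val s = ⌊T * 2 ^ n⌋₊ := val_bits hT.le hT1 n
  have h2n : (0:ℝ) < 2 ^ n := by positivity
  set t : ℝ := ((val s + 1 : ℕ) : ℝ) / 2 ^ s.length with ht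
  have ht1 : T < t := by
    rw [ht, hlen, hval, lt_div_iff₀ h2n]; push_cast; exact Nat.lt_floor_add_one _
  have ht2 : t ≤ T + (1/2)^n := by
    rw [ht, hlen, hval, div_le_iff₀ h2n, add_mul, ← mul_pow]
    have := Nat.floor_le (show 0 ≤ T * 2 ^ n by positivity)
    push_cast
    norm_num
    linarith
  have hdom : (φ s).Dom := by
    apply h2
    obtain ⟨k, hk⟩ := (G.gt_iff hU (Q := Q) hT hT1 (t := t) (by linarith)).1 ht1
    exact ⟨k, by simp, hk⟩
  obtain ⟨k, hk⟩ := Part.dom_iff_mem.1 hdom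
  have hk1 : ∑' p, wterm U Q T p < wsum Q t (G.L k) := (h1 _ _ hk).2
  rw [G.wsum_L] at hk1
  obtain ⟨p, hp, hpo⟩ := exists_prog hU (out k)
  have hH := hd s (out k) ((Part.mem_map_iff _).2 ⟨k, hk, rfl⟩)
  have hpd : (U.f p).Dom := Part.dom_iff_mem.2 ⟨_, hpo⟩
  refine ⟨p.length, nil_not_dom hU hpd, by omega, ?_⟩
  have hpS : p ∉ G.S k := by
    intro hm
    obtain ⟨o, ho⟩ := G.mem_S.1 hm
    have := Part.mem_unique (G.sound _ _ _ ho) hpo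
    have h3 : o.length ≤ ((G.D k).map fun x => x.2).flatten.length := by
      apply List.Sublist.length_le
      apply List.sublist_flatten_of_mem
      exact List.mem_map.2 ⟨_, ho, rfl⟩
    rw [this] at h3
    simp only [out, List.length_append, List.length_singleton] at h3
    omega
  have h3 := sum_le_w hU Q T hT hT1 (insert p (G.S k)) (by
    intro q hq
    rcases Finset.mem_insert.1 hq with rfl | hq
    · exact hpd
    · exact G.S_dom k q hq)
  rw [Finset.sum_insert hpS] at h3
  have h4 := hup t ht1.le (by linarith) (G.S k) (G.S_dom k)
  have h5 : C * (t - T) ≤ C * (1/2)^n := mul_le_mul_of_nonneg_left (by linarith) hC.le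
  linarith

theorem chaitin_random {U : Computer} (G : Stg U) (hU : IsOptimal U) {Q T : ℝ} (hQ : 0 < Q) (hQc : ComputableReal Q)
    (hT : 0 < T) (hT1 : T < 1) (hW : ComputableReal (∑' p, wterm U Q T p)) : ChaitinRandom U T T := by
  obtain ⟨d, n0, C, hC, h⟩ := rand_aux G hU hQ hQc hT hT1 hW
  have hlog := Real.log_pos one_lt_two
  set c1 : ℝ := T * Real.log C / Real.log 2 with hc1
  have key : ∀ n ≥ n0, ∃ h : ℕ, 1 ≤ h ∧ h ≤ H U (bits T n) + d ∧
      T * n + T * Q / Real.log 2 * Real.log h - c1 ≤ h := by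
    intro n hn
    obtain ⟨l, hl1, hl2, hl3⟩ := h n hn
    refine ⟨l, hl1, hl2, ?_⟩
    have hl0 : (0:ℝ) < l := by exact_mod_cast hl1
    have h3 := Real.log_le_log (by unfold wt; positivity) hl3
    unfold wt at h3
    rw [Real.log_mul (by positivity) (by positivity), Real.log_mul (by positivity) (by positivity),
      Real.log_rpow hl0, Real.log_rpow two_pos, Real.log_pow, one_div, Real.log_inv] at h3
    have h4 : T / Real.log 2 * (Q * Real.log l + -(l:ℝ) / T * Real.log 2) ≤
        T / Real.log 2 * (Real.log C + n * -Real.log 2) := mul_le_mul_of_nonneg_left h3 (by positivity)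
    have e1 : T / Real.log 2 * (Q * Real.log l + -(l:ℝ) / T * Real.log 2) = T * Q / Real.log 2 * Real.log l - l := by
      field_simp; ring
    have e2 : T / Real.log 2 * (Real.log C + n * -Real.log 2) = c1 - T * n := by
      rw [hc1]; field_simp; ring
    linarith
  have lim : Tendsto (fun n : ℕ => T * Q / Real.log 2 * Real.log (T * n - c1) + (-c1 - d)) atTop atTop := by
    apply tendsto_atTop_add_const_right
    apply Tendsto.const_mul_atTop (by positivity)
    apply Real.tendsto_log_atTop.comp
    simp_rw [sub_eq_add_neg]
    apply tendsto_atTop_add_const_right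
    exact tendsto_natCast_atTop_atTop.const_mul_atTop hT
  refine tendsto_atTop_mono' _ ?_ lim
  have hpos : ∀ᶠ n : ℕ in atTop, (0:ℝ) < T * n - c1 := by
    have : Tendsto (fun n : ℕ => T * n - c1) atTop atTop := by
      simp_rw [sub_eq_add_neg]
      apply tendsto_atTop_add_const_right
      exact tendsto_natCast_atTop_atTop.const_mul_atTop hT
    exact this.eventually_gt_atTop 0
  filter_upwards [hpos, eventually_ge_atTop n0] with n hn hn'
  obtain ⟨l, hl1, hl2, hl3⟩ := key n hn'
  have hl1' : (1:ℝ) ≤ l := by exact_mod_cast hl1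
  have hl2' : (l:ℝ) ≤ H U (bits T n) + d := by exact_mod_cast hl2
  have ha : 0 ≤ T * Q / Real.log 2 := by positivity
  have h5 : 0 ≤ Real.log l := Real.log_nonneg hl1'
  have h6 : T * n - c1 ≤ l := by
    have := mul_nonneg ha h5
    linarith
  have h7 := mul_le_mul_of_nonneg_left (Real.log_le_log hn h6) ha
  linarith

theorem sqrt_ev {T : ℝ} (hT : 0 < T) (c : ℕ) : ∀ᶠ n : ℕ in atTop, 2 * (n.sqrt : ℝ) + c ≤ T * n := by
  obtain ⟨K, hK⟩ := exists_nat_ge ((2 + c) / T)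
  filter_upwards [eventually_ge_atTop (max 1 (K^2))] with n hn
  have h1 : K ≤ n.sqrt := Nat.le_sqrt'.2 (le_trans (le_max_right _ _) hn)
  have h0 : 1 ≤ n.sqrt := Nat.le_sqrt'.2 (le_trans (le_max_left _ _) hn)
  have h2 : (n.sqrt:ℝ) * n.sqrt ≤ n := by exact_mod_cast Nat.sqrt_le n
  have h1' : (K:ℝ) ≤ n.sqrt := by exact_mod_cast h1
  have h0' : (1:ℝ) ≤ n.sqrt := by exact_mod_cast h0
  rw [div_le_iff₀ hT] at hK
  have h3 : (2 + c : ℝ) ≤ n.sqrt * T := hK.trans (mul_le_mul_of_nonneg_right h1' hT.le)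
  have hc : (0:ℝ) ≤ c := by positivity
  nlinarith

theorem H_desc2 {U : Computer} (hU : IsOptimal U) (m : ℕ → ℕ) (hm : Primrec m)
    (φ : ℕ × List Bool →. ℕ) (hφ : Partrec φ) :
    ∃ d, ∀ n x u j, x.length = m n → u ∈ φ (n, x) → j ≤ u + 1 →
      H U (tobits (n, j)) ≤ 2 * n.sqrt + (u + 1 - j) + m n + d := by
  have ht := tobits_pr
  have h1 : Primrec fun y : ℕ × ℕ × List Bool => (y.1, y.2.2) := by fun_prop
  have h2 : Partrec fun y : ℕ × ℕ × List Bool => φ (y.1, y.2.2) := hφ.comp h1.to_comp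
  obtain ⟨d, hd⟩ := H_desc hU m hm
    (fun y => (φ (y.1, y.2.2)).map fun u => tobits (y.1, u + 1 - y.2.1))
    (h2.map (show Primrec fun z : (ℕ × ℕ × List Bool) × ℕ => tobits (z.1.1, z.2 + 1 - z.1.2.1) by fun_prop).to_comp)
  refine ⟨d, fun n x u j hx hu hj => hd n (u + 1 - j) x _ hx ((Part.mem_map_iff _).2 ⟨u, hu, ?_⟩)⟩
  simp only
  congr 2; omega

theorem not_left {U : Computer} (hU : IsOptimal U) {T : ℝ} (hT : 0 < T) (hT1 : T < 1)
    (hA : RE fun y : ℕ × ℕ => 1 ≤ y.1 ∧ T < (y.1:ℝ) / 2 ^ y.2)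
    (hR : ChaitinRandom U T T) : ¬ LeftComputable T := by
  rintro ⟨g, hg, hg1, hg2⟩
  obtain ⟨P, M, D, hP, hM, hD, hq⟩ := rat_pmd
  have hB : RE fun y : ℕ × ℕ => (y.1:ℝ) / 2 ^ y.2 < T := by
    have h1 : Primrec fun z : (ℕ × ℕ) × (ℕ × ℕ × ℕ) => decide (z.1.1 * z.2.2.2 + z.2.1 * 2 ^ z.1.2 < z.2.2.1 * 2 ^ z.1.2) := by
      fun_prop
    have hgi : Computable fun z : (ℕ × ℕ) × ℕ => g z.2 := hg.comp Computable.snd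
    have h2 : Computable fun z : (ℕ × ℕ) × ℕ => (z.1, (P (g z.2), M (g z.2), D (g z.2))) :=
      cp_pair Computable.fst (cp_pair (hP.comp hgi) (cp_pair (hM.comp hgi) (hD.comp hgi)))
    have h3 : RE fun z : (ℕ × ℕ) × ℕ => z.1.1 * D (g z.2) + P (g z.2) * 2 ^ z.1.2 < M (g z.2) * 2 ^ z.1.2 :=
      (RE.of_prim h1).comp h2
    refine h3.ex.of_iff fun y => ?_
    have e : ∀ i, (y.1 * D (g i) + P (g i) * 2 ^ y.2 < M (g i) * 2 ^ y.2 ↔ (y.1:ℝ) / 2 ^ y.2 < - (g i : ℝ)) := by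
      intro i
      obtain ⟨hd, he⟩ := hq (g i)
      have he' : (g i : ℝ) = ((P (g i) : ℝ) - M (g i)) / D (g i) := by
        conv_lhs => rw [he]
        push_cast; rfl
      have hd' : (0:ℝ) < D (g i) := by exact_mod_cast hd
      rw [he', ← neg_div, div_lt_div_iff₀ (by positivity) hd', ← @Nat.cast_lt ℝ]
      push_cast
      constructor <;> intro h <;> linarith
    constructor
    · intro h
      have h4 := hg2.eventually (gt_mem_nhds (show -T < -((y.1:ℝ) / 2 ^ y.2) by linarith))
      obtain ⟨i, hi⟩ := h4.exists
      exact ⟨i, (e i).2 (by linarith)⟩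
    · rintro ⟨i, hi⟩
      have := (e i).1 hi
      have := hg1 i
      linarith
  have hPP : RE fun z : (ℕ × List Bool) × ℕ => ((z.2:ℝ) / 2 ^ z.1.1 < T) ∧ (1 ≤ z.2 + 2 ∧ T < ((z.2 + 2 : ℕ):ℝ) / 2 ^ z.1.1) :=
    (hB.compp (f := fun z : (ℕ × List Bool) × ℕ => (z.2, z.1.1)) (by fun_prop)).and
      (hA.compp (f := fun z : (ℕ × List Bool) × ℕ => (z.2 + 2, z.1.1)) (by fun_prop))
  obtain ⟨φ, hφ, h1, h2⟩ := hPP.choose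
  obtain ⟨d, hd⟩ := H_desc2 hU (fun _ => 0) (Primrec.const 0) φ hφ
  have hb : ∀ n, H U (bits T n) ≤ 2 * n.sqrt + 1 + d := by
    intro n
    have h2n : (0:ℝ) < 2 ^ n := by positivity
    have hdom : ∀ x, (φ (n, x)).Dom := by
      intro x
      apply h2
      refine ⟨⌈T * 2 ^ n⌉₊ - 1, ?_, by omega, ?_⟩
      · simp only
        have h3 : 0 < ⌈T * 2 ^ n⌉₊ := Nat.ceil_pos.2 (by positivity)
        rw [div_lt_iff₀ h2n]
        push_cast [Nat.cast_sub h3]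
        have := Nat.ceil_lt_add_one (show 0 ≤ T * 2 ^ n by positivity)
        linarith
      · simp only
        have h3 : 0 < ⌈T * 2 ^ n⌉₊ := Nat.ceil_pos.2 (by positivity)
        rw [lt_div_iff₀ h2n]
        push_cast [Nat.cast_sub h3]
        have := Nat.le_ceil (T * 2 ^ n)
        linarith
    have hu : ∀ x u, u ∈ φ (n, x) → u = ⌊T * 2 ^ n⌋₊ ∨ u + 1 = ⌊T * 2 ^ n⌋₊ := by
      intro x u hu
      obtain ⟨h3, _, h4⟩ := h1 _ _ hu
      simp only at h3 h4
      rw [div_lt_iff₀ h2n] at h3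
      rw [lt_div_iff₀ h2n] at h4
      have h5 : u ≤ ⌊T * 2 ^ n⌋₊ := Nat.le_floor h3.le
      have h6 : ⌊T * 2 ^ n⌋₊ < u + 2 := (Nat.floor_lt (by positivity)).2 h4
      omega
    rw [bits_eq hT.le hT1]
    obtain ⟨u0, hu0⟩ := Part.dom_iff_mem.1 (hdom [])
    have h3 := hu [] u0 hu0
    have := hd n [] u0 ⌊T * 2 ^ n⌋₊ rfl hu0 (by omega)
    omega
  obtain ⟨n, h3, h4⟩ := ((hR.eventually_gt_atTop 0).and (sqrt_ev hT (1 + d))).exists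
  have h5 : (H U (bits T n) : ℝ) ≤ 2 * n.sqrt + 1 + d := by exact_mod_cast hb n
  push_cast at h4
  linarith
end Part8

section Part9
theorem kraft_iff {U : Computer} (G : Stg U) (i m k : ℕ) :
    i * 2 ^ (G.L k).sum < 2 ^ m * ((G.L k).map fun l => 2 ^ ((G.L k).sum - l)).sum ↔
      (i:ℝ) < 2 ^ m * ∑ p ∈ G.S k, (1/2:ℝ) ^ p.length := by
  set M := (G.L k).sum with hM
  have h1 : (((G.L k).map fun l => 2 ^ (M - l)).sum : ℕ) = 2 ^ M * ∑ p ∈ G.S k, (1/2:ℝ) ^ p.length := by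
    rw [← G.map_sum (f := fun l => (1/2:ℝ)^l), Nat.cast_list_sum, ← List.sum_map_mul_left, List.map_map]
    congr 1
    apply List.map_congr_left
    intro l hl
    have hlM : l ≤ M := List.le_sum_of_mem hl
    simp only [Function.comp]
    push_cast
    obtain ⟨r, hr⟩ := Nat.exists_eq_add_of_le hlM
    rw [hr, Nat.add_sub_cancel_left, pow_add, one_div, inv_pow]
    field_simp
  rw [← @Nat.cast_lt ℝ]
  push_cast
  push_cast at h1
  rw [h1]
  have : (0:ℝ) < 2 ^ M := by positivity
  constructor
  · intro h
    by_contra hc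
    nlinarith
  · intro h
    nlinarith

theorem exists_i {U : Computer} (G : Stg U) (hU : IsOptimal U) (m : ℕ) :
    ∃ i : ℕ, i < 2 ^ m ∧ (∃ k, (i:ℝ) < 2 ^ m * ∑ p ∈ G.S k, (1/2:ℝ) ^ p.length) ∧
      ∀ k, 2 ^ m * ∑ p ∈ G.S k, (1/2:ℝ) ^ p.length ≤ (i:ℝ) + 1 := by
  classical
  have hex : ∃ b : ℕ, ∀ k, 2 ^ m * ∑ p ∈ G.S k, (1/2:ℝ) ^ p.length ≤ (b:ℝ) := by
    refine ⟨2 ^ m, fun k => ?_⟩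
    have := kraft hU (G.S k) (G.S_dom k)
    have h2 : (0:ℝ) < 2 ^ m := by positivity
    push_cast
    nlinarith
  have hb := Nat.find_spec hex
  have hle : Nat.find hex ≤ 2 ^ m := by
    apply Nat.find_min' hex
    intro k
    have := kraft hU (G.S k) (G.S_dom k)
    have h2 : (0:ℝ) < 2 ^ m := by positivity
    push_cast
    nlinarith
  have hpos : Nat.find hex ≠ 0 := by
    intro h0
    rw [h0] at hb
    obtain ⟨p0, o, _, h2⟩ := exists_p0 hU
    obtain ⟨k, hk⟩ := G.compl p0 o h2
    have h3 : p0 ∈ G.S k := G.mem_S.2 ⟨o, hk k le_rfl⟩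
    have h4 := Finset.single_le_sum (f := fun p : List Bool => (1/2:ℝ)^p.length) (fun _ _ => by positivity) h3
    have h5 : (0:ℝ) < (1/2:ℝ)^p0.length := by positivity
    have h6 := hb k
    have h7 : (0:ℝ) < 2 ^ m * ∑ p ∈ G.S k, (1/2:ℝ) ^ p.length := mul_pos (by positivity) (h5.trans_le h4)
    push_cast at h6
    linarith
  obtain ⟨i, hi⟩ := Nat.exists_eq_succ_of_ne_zero hpos
  refine ⟨i, by omega, ?_, fun k => ?_⟩
  · have := Nat.find_min hex (m := i) (by omega)
    push Not at this
    exact this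
  · have := hb k
    rw [hi] at this
    push_cast at this
    exact this

theorem wt_tail {Q T T' : ℝ} (hT : 0 < T) (hTT : T < T') (hT1 : T' < 1) :
    ∃ C : ℝ, 0 < C ∧ ∀ (n m : ℕ), T' * n ≤ m → ∀ S : Finset (List Bool), (∀ p ∈ S, m ≤ p.length) →
      ∑ p ∈ S, (1/2:ℝ) ^ p.length ≤ (1/2) ^ m → ∑ p ∈ S, wt Q T p.length ≤ C * (1/2)^n := by
  obtain ⟨C, hC, h⟩ := rpow_bound Q (1/T - 1/T') (by
    rw [sub_pos]; exact one_div_lt_one_div_of_lt hT hTT)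
  refine ⟨C, hC, fun n m hm S hS hk => ?_⟩
  have e : ∀ l : ℕ, (1/2:ℝ)^l = (2:ℝ)^(-(l:ℝ)) := by
    intro l
    rw [Real.rpow_neg two_pos.le, Real.rpow_natCast]; simp
  have hT' : 0 < T' := by linarith
  have hx : 0 < 1/T' - 1 := by rw [sub_pos]; exact (one_lt_div hT').2 hT1
  have h1 : ∀ p ∈ S, wt Q T p.length ≤ C * (2:ℝ) ^ (-(m:ℝ) * (1/T' - 1)) * (1/2:ℝ)^p.length := by
    intro p hp
    have hl : (m:ℝ) ≤ p.length := by exact_mod_cast hS p hp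
    have : wt Q T p.length = ((p.length:ℝ) ^ Q * (2:ℝ) ^ (-(p.length:ℝ) * (1/T-1/T'))) *
        ((2:ℝ) ^ (-(p.length:ℝ) * (1/T' - 1))) * (1/2:ℝ)^p.length := by
      unfold wt
      rw [e, mul_assoc, mul_assoc, ← Real.rpow_add two_pos, ← Real.rpow_add two_pos]
      congr 2; ring
    rw [this]
    apply mul_le_mul_of_nonneg_right _ (by positivity)
    apply mul_le_mul (h _) _ (by positivity) hC.le
    apply Real.rpow_le_rpow_of_exponent_le one_le_two
    nlinarith
  calc ∑ p ∈ S, wt Q T p.length ≤ ∑ p ∈ S, C * (2:ℝ) ^ (-(m:ℝ) * (1/T' - 1)) * (1/2:ℝ)^p.length :=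
        Finset.sum_le_sum h1
    _ = C * (2:ℝ) ^ (-(m:ℝ) * (1/T' - 1)) * ∑ p ∈ S, (1/2:ℝ)^p.length := by rw [Finset.mul_sum]
    _ ≤ C * (2:ℝ) ^ (-(m:ℝ) * (1/T' - 1)) * (1/2)^m := mul_le_mul_of_nonneg_left hk (by positivity)
    _ = C * (2:ℝ) ^ (-(m:ℝ) / T') := by
      rw [e m, mul_assoc, ← Real.rpow_add two_pos]
      congr 2; ring
    _ ≤ C * (1/2)^n := by
      apply mul_le_mul_of_nonneg_left _ hC.le
      rw [e n]
      apply Real.rpow_le_rpow_of_exponent_le one_le_two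
      rw [neg_div, neg_le_neg_iff, le_div_iff₀ hT']
      linarith

theorem stage_close {U : Computer} (G : Stg U) {Q T T' : ℝ} (hT : 0 < T) (hTT : T < T') (hT1 : T' < 1) :
    ∃ C : ℝ, 0 < C ∧ ∀ n m i k : ℕ, T' * n ≤ m → (i:ℝ) < 2 ^ m * ∑ p ∈ G.S k, (1/2:ℝ) ^ p.length →
      (∀ k, 2 ^ m * ∑ p ∈ G.S k, (1/2:ℝ) ^ p.length ≤ (i:ℝ) + 1) →
      (∀ p, (U.f p).Dom → p.length ≤ m → p ∈ G.S k) ∧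
      ∑' p, wterm U Q T p ≤ ∑ p ∈ G.S k, wt Q T p.length + C * (1/2)^n := by
  obtain ⟨C, hC, h⟩ := wt_tail (Q := Q) hT hTT hT1
  refine ⟨C, hC, fun n m i k hm hi hk => ?_⟩
  have h2m : (0:ℝ) < 2 ^ m := by positivity
  have rest : ∀ S : Finset (List Bool), (∀ p ∈ S, (U.f p).Dom) → Disjoint (G.S k) S →
      ∑ p ∈ S, (1/2:ℝ) ^ p.length < (1/2) ^ m := by
    intro S hS hd
    obtain ⟨k', hk'⟩ := G.S_sub (G.S k ∪ S) (by
      intro p hp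
      rcases Finset.mem_union.1 hp with hp | hp
      · exact G.S_dom k p hp
      · exact hS p hp)
    have h1 : ∑ p ∈ G.S k ∪ S, (1/2:ℝ) ^ p.length ≤ ∑ p ∈ G.S k', (1/2:ℝ) ^ p.length :=
      Finset.sum_le_sum_of_subset_of_nonneg (hk' k' le_rfl) fun _ _ _ => by positivity
    rw [Finset.sum_union hd] at h1
    have h2 := hk k'
    rw [half_pow_eq, lt_div_iff₀ h2m]
    nlinarith
  have hmem : ∀ p, (U.f p).Dom → p.length ≤ m → p ∈ G.S k := by
    intro p hp hpm
    by_contra hc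
    have := rest {p} (by simpa using hp) (by simpa using hc)
    rw [Finset.sum_singleton] at this
    have h3 : (1/2:ℝ)^m ≤ (1/2)^p.length := pow_le_pow_of_le_one (by norm_num) (by norm_num) hpm
    linarith
  refine ⟨hmem, w_le Q T _ fun S hS => ?_⟩
  have h1 := h n m hm (S \ G.S k) (by
    intro p hp
    obtain ⟨hp1, hp2⟩ := Finset.mem_sdiff.1 hp
    by_contra hc
    exact hp2 (hmem p (hS p hp1) (by omega)))
    (rest _ (fun p hp => hS p (Finset.mem_sdiff.1 hp).1) Finset.disjoint_sdiff).le
  have h2 : ∑ p ∈ S, wt Q T p.length ≤ ∑ p ∈ G.S k ∪ (S \ G.S k), wt Q T p.length := by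
    apply Finset.sum_le_sum_of_subset_of_nonneg
    · intro p hp; simp [hp]
    · intro _ _ _; exact wt_nonneg _ _ _
  rw [Finset.sum_union Finset.disjoint_sdiff] at h2
  linarith
end Part9

section Part10
theorem compress_aux {U : Computer} (G : Stg U) (hU : IsOptimal U) {Q T : ℝ} (hQ : 0 < Q) (hQc : ComputableReal Q)
    (hT : 0 < T) (hW : ComputableReal (∑' p, wterm U Q T p))
    (A B : ℕ) (hB : 0 < B) (hTT : T < (A:ℝ)/B) (hT1 : (A:ℝ)/B < 1) :
    ∃ d : ℕ, ∀ᶠ n : ℕ in atTop, (H U (bits T n) : ℝ) ≤ 2 * n.sqrt + (A:ℝ)/B * n + d := by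
  have hL := G.L_pr
  have hv := val_pr
  have hTlt : T < 1 := by linarith
  set w := ∑' p, wterm U Q T p with hw
  let m : ℕ → ℕ := fun n => A * n / B + 1
  have hm : Primrec m := by simp only [m]; fun_prop
  have hB' : (0:ℝ) < B := by exact_mod_cast hB
  have m1 : ∀ n, (A:ℝ)/B * n ≤ m n := by
    intro n
    have := Nat.lt_div_mul_add (a := A * n) hB
    have h2 : ((A * n : ℕ):ℝ) < ((A * n / B * B + B : ℕ) : ℝ) := by exact_mod_cast this
    simp only [m]
    rw [div_mul_eq_mul_div, div_le_iff₀ hB']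
    push_cast at h2 ⊢
    linarith
  have m2 : ∀ n, (m n : ℝ) ≤ (A:ℝ)/B * n + 1 := by
    intro n
    have := @Nat.cast_div_le ℝ _ _ _ (A * n) B
    simp only [m]
    push_cast at this ⊢
    rw [div_mul_eq_mul_div]
    linarith
  have hRE : RE fun z : (ℕ × List Bool) × (ℕ × ℕ) =>
      (val z.1.2 * 2 ^ (G.L z.2.1).sum < 2 ^ m z.1.1 * ((G.L z.2.1).map fun l => 2 ^ ((G.L z.2.1).sum - l)).sum) ∧
      (1 ≤ z.2.2 ∧ wsum Q ((z.2.2:ℝ) / 2 ^ z.1.1) (G.L z.2.1) < w) ∧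
      (1 ≤ z.2.2 + 2 ∧ w < wsum Q (((z.2.2 + 2 : ℕ):ℝ) / 2 ^ z.1.1) (G.L z.2.1)) := by
    refine RE.and (RE.of_prim (by fun_prop)) (RE.and ?_ ?_)
    · exact (RE_lt hQ hQc hW).compp (f := fun z : (ℕ × List Bool) × (ℕ × ℕ) => (G.L z.2.1, z.2.2, z.1.1)) (by fun_prop)
    · exact (RE_gt hQ hQc hW).compp (f := fun z : (ℕ × List Bool) × (ℕ × ℕ) => (G.L z.2.1, z.2.2 + 2, z.1.1)) (by fun_prop)
  obtain ⟨φ, hφ, h1, h2⟩ := hRE.choose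
  obtain ⟨d, hd⟩ := H_desc2 hU m hm (fun y => (φ y).map Prod.snd)
    (hφ.map (Computable.snd.comp Computable.snd))
  obtain ⟨C, hC, hclose⟩ := stage_close G (Q := Q) hT hTT hT1
  obtain ⟨p0, o0, hp1, hp0⟩ := exists_p0 hU
  have hp0d : (U.f p0).Dom := Part.dom_iff_mem.2 ⟨_, hp0⟩
  obtain ⟨c, hc, hlow⟩ := wt_lower (Q := Q) hT hp1
  obtain ⟨R, hR⟩ := exists_nat_ge (C / c)
  rw [div_le_iff₀ hc] at hR
  have hpow : Tendsto (fun n : ℕ => (2:ℝ) ^ n) atTop atTop := tendsto_pow_atTop_atTop_of_one_lt one_lt_two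
  have ev1 : ∀ᶠ n : ℕ in atTop, 3 ≤ T * 2 ^ n := (hpow.const_mul_atTop hT).eventually_ge_atTop 3
  have ev2 : ∀ᶠ n : ℕ in atTop, (R:ℝ) + 1 ≤ (1 - T) * 2 ^ n :=
    (hpow.const_mul_atTop (show 0 < 1 - T by linarith)).eventually_ge_atTop _
  have ev3 : ∀ᶠ n : ℕ in atTop, (p0.length : ℝ) ≤ (A:ℝ)/B * n :=
    (tendsto_natCast_atTop_atTop.const_mul_atTop (show 0 < (A:ℝ)/B by linarith)).eventually_ge_atTop _
  refine ⟨R + 2 + d, ?_⟩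
  filter_upwards [ev1, ev2, ev3] with n e1 e2 e3
  have h2n : (0:ℝ) < 2 ^ n := by positivity
  obtain ⟨i, hi, ⟨k0, hk0⟩, hi2⟩ := exists_i G hU (m n)
  have hx : (tobits (m n, i)).length = m n := tobits_length _ _
  have hval : val (tobits (m n, i)) = i := val_tobits _ _ hi
  set j := ⌊T * 2 ^ n⌋₊ with hj
  have hj1 : (j:ℝ) ≤ T * 2 ^ n := Nat.floor_le (by positivity)
  have hj2 : T * 2 ^ n < j + 1 := Nat.lt_floor_add_one _
  -- properties of any good stage
  have good : ∀ k, (i:ℝ) < 2 ^ m n * ∑ p ∈ G.S k, (1/2:ℝ) ^ p.length →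
      p0 ∈ G.S k ∧ w < wsum Q (((j + R + 1 : ℕ):ℝ) / 2 ^ n) (G.L k) := by
    intro k hk
    obtain ⟨h3, h4⟩ := hclose n (m n) i k (m1 n) hk hi2
    have hmem : p0 ∈ G.S k := h3 p0 hp0d (by
      have := e3.trans (m1 n)
      exact_mod_cast this)
    refine ⟨hmem, ?_⟩
    rw [G.wsum_L]
    set t : ℝ := ((j + R + 1 : ℕ):ℝ) / 2 ^ n with ht
    have ht1 : T + R / 2 ^ n < t := by
      rw [ht, lt_div_iff₀ h2n, add_mul, div_mul_cancel₀ _ h2n.ne']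
      push_cast; linarith
    have ht2 : t ≤ 1 := by
      rw [ht, div_le_one h2n]; push_cast; linarith
    have hR0 : (0:ℝ) ≤ R / 2 ^ n := by positivity
    have hTt : T ≤ t := by linarith
    have h5 := hlow T t le_rfl hTt ht2
    have h6 : C * (1/2)^n < c * (t - T) := by
      have : C / 2 ^ n ≤ R * c / 2 ^ n := by gcongr
      rw [half_pow_eq, mul_one_div]
      have h7 : c * (R / 2 ^ n) < c * (t - T) := mul_lt_mul_of_pos_left (by linarith) hc
      have h8 : R * c / 2 ^ n = c * (R / 2 ^ n) := by ring
      linarith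
    have h7 : ∑ p ∈ G.S k, wt Q T p.length + c * (t - T) ≤ ∑ p ∈ G.S k, wt Q t p.length := by
      rw [← Finset.add_sum_erase _ _ hmem, ← Finset.add_sum_erase _ (fun p => wt Q t p.length) hmem]
      have := sum_mono_t (Q := Q) hT hTt ((G.S k).erase p0)
      linarith
    linarith
  have hdom : (φ (n, tobits (m n, i))).Dom := by
    classical
    apply h2
    obtain ⟨hmem, hgd⟩ := good k0 hk0
    have hex : ∃ v : ℕ, 1 ≤ v ∧ w < wsum Q ((v:ℝ) / 2 ^ n) (G.L k0) := ⟨_, by omega, hgd⟩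
    obtain ⟨hv1, hv2⟩ := Nat.find_spec hex
    have hmin := fun v hv => Nat.find_min hex (m := v) hv
    set v := Nat.find hex with hvdef
    have hvT : T < (v:ℝ) / 2 ^ n := (G.gt_iff hU (Q := Q) hT hTlt (by positivity)).2 ⟨k0, hv2⟩
    have hv3 : 3 ≤ v := by
      rw [lt_div_iff₀ h2n] at hvT
      have : (3:ℝ) < v := by linarith
      exact_mod_cast this.le
    refine ⟨(k0, v - 2), ?_, ⟨?_, ?_⟩, ?_, ?_⟩
    · simp only
      rw [hval, kraft_iff]
      exact hk0
    · simp only; omega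
    · simp only
      have h3 := hmin (v - 1) (by omega)
      have h4 : wsum Q (((v - 1 : ℕ):ℝ) / 2 ^ n) (G.L k0) ≤ w := by
        by_contra hcc
        exact h3 ⟨by omega, not_le.1 hcc⟩
      refine lt_of_lt_of_le ?_ h4
      rw [G.wsum_L, G.wsum_L]
      have ha : (0:ℝ) < ((v - 2 : ℕ):ℝ) / 2 ^ n := by
        have : 0 < v - 2 := by omega
        have : (0:ℝ) < ((v - 2 : ℕ):ℝ) := by exact_mod_cast this
        positivity
      have hb : ((v - 2 : ℕ):ℝ) / 2 ^ n < ((v - 1 : ℕ):ℝ) / 2 ^ n := by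
        apply div_lt_div_of_pos_right _ h2n
        exact_mod_cast (show v - 2 < v - 1 by omega)
      exact Finset.sum_lt_sum (fun p _ => wt_mono_t ha hb.le _) ⟨p0, hmem, wt_strict ha hb hp1⟩
    · simp only; omega
    · simp only
      rw [show v - 2 + 2 = v by omega]
      exact hv2
  obtain ⟨⟨k, u⟩, hku⟩ := Part.dom_iff_mem.1 hdom
  obtain ⟨q1, ⟨q2, q3⟩, _, q4⟩ := h1 _ _ hku
  simp only at q1 q2 q3 q4
  rw [hval, kraft_iff] at q1
  obtain ⟨_, hgd⟩ := good k q1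
  have hu1 : u < j + R + 1 := by
    by_contra hcc
    have hcc' : ((j + R + 1 : ℕ):ℝ) ≤ u := by exact_mod_cast not_lt.1 hcc
    rw [G.wsum_L] at q3 hgd
    have := sum_mono_t (Q := Q) (s := ((j + R + 1 : ℕ):ℝ) / 2 ^ n) (t := (u:ℝ) / 2 ^ n) (by positivity)
      (div_le_div_of_nonneg_right hcc' h2n.le) (G.S k)
    linarith
  have hu2 : j ≤ u + 1 := by
    have : T < ((u + 2 : ℕ):ℝ) / 2 ^ n := (G.gt_iff hU (Q := Q) hT hTlt (by positivity)).2 ⟨k, q4⟩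
    rw [lt_div_iff₀ h2n] at this
    have h3 : (j:ℝ) < ((u + 2 : ℕ):ℝ) := by linarith
    have : j < u + 2 := by exact_mod_cast h3
    omega
  have hfin := hd n (tobits (m n, i)) u j hx ((Part.mem_map_iff _).2 ⟨(k, u), hku, rfl⟩) hu2
  rw [bits_eq hT.le hTlt]
  have h3 : H U (tobits (n, j)) ≤ 2 * n.sqrt + (R + 1) + m n + d := by omega
  have h4 : (H U (tobits (n, j)) : ℝ) ≤ 2 * n.sqrt + (R + 1) + m n + d := by exact_mod_cast h3
  have h5 := m2 n
  push_cast
  linarith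

theorem compressible {U : Computer} (G : Stg U) (hU : IsOptimal U) {Q T : ℝ} (hQ : 0 < Q) (hQc : ComputableReal Q)
    (hT : 0 < T) (hT1 : T < 1) (hW : ComputableReal (∑' p, wterm U Q T p)) : DCompressible U T T := by
  unfold DCompressible
  refine le_of_forall_gt_imp_ge_of_dense fun T2 hT2 => ?_
  apply limsup_le_of_le
  · apply IsBoundedUnder.isCoboundedUnder_le
    exact isBoundedUnder_of ⟨0, fun n => by positivity⟩
  · obtain ⟨q, hq1, hq2⟩ := exists_rat_btwn (lt_min hT2 hT1)
    have hq0 : (0:ℝ) < q := by linarith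
    have hq0' : 0 < q := by exact_mod_cast hq0
    have hqe : (q:ℝ) = ((q.num.toNat : ℕ):ℝ) / q.den := by
      conv_lhs => rw [← Rat.num_div_den q]
      have : ((q.num.toNat : ℕ) : ℤ) = q.num := Int.toNat_of_nonneg (Rat.num_pos.2 hq0').le
      push_cast
      congr 1
      exact_mod_cast this.symm
    obtain ⟨d, hd⟩ := compress_aux G hU hQ hQc hT hW q.num.toNat q.den q.den_pos (by rw [← hqe]; exact hq1)
      (by rw [← hqe]; exact lt_of_lt_of_le hq2 (min_le_right _ _))
    rw [← hqe] at hd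
    have hlt : (q:ℝ) < T2 := lt_of_lt_of_le hq2 (min_le_left _ _)
    filter_upwards [hd, sqrt_ev (show 0 < T2 - q by linarith) d, eventually_gt_atTop 0] with n h1 h2 h3
    have h3' : (0:ℝ) < n := by exact_mod_cast h3
    rw [div_le_iff₀ h3']
    linarith

theorem main_aux (U : Computer) (hU : IsOptimal U)
    (Q : ℝ) (hQpos : 0 < Q) (hQc : ComputableReal Q)
    (T : ℝ) (hT0 : 0 < T) (hT1 : T < 1)
    (hW : ComputableReal (∑' p, wterm U Q T p)) :
    RightComputable T ∧ ¬ LeftComputable T ∧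
    ChaitinRandom U T T ∧ DCompressible U T T := by
  obtain ⟨D, h1, h2, h3, h4⟩ := stages U.f U.partrec
  let G : Stg U := ⟨D, h1, h2, h3, h4⟩
  have hA := G.RE_A hU hQpos hQc hT0 hT1 hW
  have hR := chaitin_random G hU hQpos hQc hT0 hT1 hW
  exact ⟨right_comp hT0 hT1 hA, not_left hU hT0 hT1 hA hR, hR, compressible G hU hQpos hQc hT0 hT1 hW⟩
end Part10

/-- **Theorem (paper Thm 20, fixed point theorem on compression rate II).**
Let `Q` be a computable real with `Q > 0` and `T ∈ (0,1)`. If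
`W(Q,T) = ∑_{p ∈ dom U} |p|^Q·2^{-|p|/T}` is a computable real number, then
`T` is right-computable but not left-computable, and `T` is Chaitin
`T`-random and `T`-compressible. -/
theorem fixed_point_compression_rate_II (U : Computer) (hU : IsOptimal U)
    (Q : ℝ) (hQpos : 0 < Q) (hQc : ComputableReal Q)
    (T : ℝ) (hT0 : 0 < T) (hT1 : T < 1)
    (hW : ComputableReal (∑' p, wterm U Q T p)) :
    RightComputable T ∧ ¬ LeftComputable T ∧
    ChaitinRandom U T T ∧ DCompressible U T T := by
  exact main_aux U hU Q hQpos hQc T hT0 hT1 hW
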